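/- Let S₁ and S₂ be two irreducible reduced cones in Pⁿ over an algebraically closed field of characteristic zero, and let C₁ and C₂ be their respective general hyperplane sections. If C₁ is birational to C₂ (as abstract varieties), then S₁ is Cremona equivalent to S₂. -/

import Mathlib

/-!
Concrete framework: projective space over a field `k` as `Projectivization`,
hypersurfaces as zero loci of homogeneous polynomials, rational maps given by
tuples of homogeneous polynomials, birational maps between (closed) subvarieties,
and Cremona equivalence of divisors.
-/

open MvPolynomial

/-- Projective `n`-space over `k`, as the projectivization of `k^{n+1}`. -/
abbrev ProjSp (k : Type) [Field k] (n : ℕ) : Type :=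
  Projectivization k (Fin (n + 1) → k)

namespace ProjSp

variable (k : Type) [Field k]

/-- The zero locus in `ℙⁿ` of a (homogeneous) polynomial. -/
def zeros {n : ℕ} (f : MvPolynomial (Fin (n + 1)) k) : Set (ProjSp k n) :=
  {x | eval x.rep f = 0}

/-- `D ⊆ ℙⁿ` is an irreducible and reduced divisor (hypersurface): it is the zero
locus of an irreducible homogeneous polynomial of positive degree. -/
def IsIrredDivisor {n : ℕ} (D : Set (ProjSp k n)) : Prop :=
  ∃ (d : ℕ) (f : MvPolynomial (Fin (n + 1)) k),
    0 < d ∧ f.IsHomogeneous d ∧ Irreducible f ∧ D = zeros k f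

/-- A hyperplane in `ℙⁿ`: the zero locus of a nonzero linear form. -/
def IsHyperplane {n : ℕ} (H : Set (ProjSp k n)) : Prop :=
  ∃ f : MvPolynomial (Fin (n + 1)) k, f ≠ 0 ∧ f.IsHomogeneous 1 ∧ H = zeros k f

/-- The line through two points of `ℙⁿ` (the set of points whose representing line
lies in the plane spanned by the two points). -/
def lineThrough {n : ℕ} (p q : ProjSp k n) : Set (ProjSp k n) :=
  {z | z.submodule ≤ p.submodule ⊔ q.submodule}

/-- `S` is a cone with vertex `p`: `p ∈ S` and `S` is a union of lines through `p`.
For an irreducible divisor of degree `d` this is equivalent to `p` being a point of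
multiplicity `d` on `S`. -/
def IsConeWithVertex {n : ℕ} (S : Set (ProjSp k n)) (p : ProjSp k n) : Prop :=
  p ∈ S ∧ ∀ x ∈ S, lineThrough k p x ⊆ S

/-- The cone with vertex `p` over a set `A ⊆ ℙⁿ`: the union of the lines joining `p`
to the points of `A`. -/
def coneOver {n : ℕ} (p : ProjSp k n) (A : Set (ProjSp k n)) : Set (ProjSp k n) :=
  ⋃ a ∈ A, lineThrough k p a

/-- The data of a rational map `ℙⁿ ⇢ ℙᵐ`: an `(m+1)`-tuple of homogeneous polynomials
of a common degree in `n+1` variables. -/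
structure RatMap (n m : ℕ) where
  deg : ℕ
  comp : Fin (m + 1) → MvPolynomial (Fin (n + 1)) k
  homog : ∀ i, (comp i).IsHomogeneous deg

variable {k}

/-- The rational map is defined at `x` if not all of its components vanish at `x`. -/
def RatMap.Defined {n m : ℕ} (F : RatMap k n m) (x : ProjSp k n) : Prop :=
  (fun i => eval x.rep (F.comp i)) ≠ 0

open scoped Classical in
/-- The value of a rational map at a point (junk value where undefined). -/
noncomputable def RatMap.app {n m : ℕ} (F : RatMap k n m) (x : ProjSp k n) :
    ProjSp k m :=
  if h : (fun i => eval x.rep (F.comp i)) ≠ 0 then Projectivization.mk k _ h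
  else Classical.arbitrary _

variable (k)

/-- `F` (with inverse `G`) restricts to a birational map from `A ⊆ ℙⁿ` onto `B ⊆ ℙᵐ`:
there are hypersurface complements, each meeting `A` resp. `B`, on which `F` and `G`
are defined, map `A` into `B` (resp. `B` into `A`) and are mutually inverse.  For
irreducible closed `A`, `B` this says exactly that `F` induces a birational map
`A ⇢ B`, i.e. that the strict transform (proper image) of `A` under `F` is `B`. -/
def IsBirationalOn {n m : ℕ} (F : RatMap k n m) (G : RatMap k m n)
    (A : Set (ProjSp k n)) (B : Set (ProjSp k m)) : Prop :=
  ∃ (u : MvPolynomial (Fin (n + 1)) k) (v : MvPolynomial (Fin (m + 1)) k)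
    (du dv : ℕ), u.IsHomogeneous du ∧ v.IsHomogeneous dv ∧
    ¬ A ⊆ zeros k u ∧ ¬ B ⊆ zeros k v ∧
    (∀ x ∈ A \ zeros k u,
      F.Defined x ∧ F.app x ∈ B ∧ G.Defined (F.app x) ∧ G.app (F.app x) = x) ∧
    (∀ y ∈ B \ zeros k v,
      G.Defined y ∧ G.app y ∈ A ∧ F.Defined (G.app y) ∧ F.app (G.app y) = y)

/-- `A ⊆ ℙⁿ` and `B ⊆ ℙᵐ` are birational (as abstract varieties). -/
def Birational {n m : ℕ} (A : Set (ProjSp k n)) (B : Set (ProjSp k m)) : Prop :=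
  ∃ (F : RatMap k n m) (G : RatMap k m n), IsBirationalOn k F G A B

/-- Two divisors `D, D' ⊆ ℙⁿ` are Cremona equivalent: there is a birational self-map
`Φ` of `ℙⁿ` (a Cremona transformation) whose strict transform of `D` is `D'`,
i.e. `Φ` restricts to a birational map from `D` onto `D'`. -/
def CremonaEquivalent {n : ℕ} (D D' : Set (ProjSp k n)) : Prop :=
  ∃ (F : RatMap k n n) (G : RatMap k n n),
    IsBirationalOn k F G Set.univ Set.univ ∧ IsBirationalOn k F G D D'

/-- `C` is a rational variety: it is birational to some projective space. -/
def IsRationalVariety {n : ℕ} (C : Set (ProjSp k n)) : Prop :=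
  ∃ m : ℕ, Birational k C (Set.univ : Set (ProjSp k m))

end ProjSp

open ProjSp


namespace ConeCrem

open MvPolynomial

section basic

variable {k : Type} [Field k] {ι κ : Type}

/-- Homogeneity under scaling of arguments. -/
theorem aeval_scale {A : Type} [CommRing A] [Algebra k A] {d : ℕ} {h : MvPolynomial ι k}
    (hh : h.IsHomogeneous d) (c : A) (x : ι → A) :
    aeval (fun i => c * x i) h = c ^ d * aeval x h := by
  classical
  rw [aeval_def, aeval_def, eval₂_eq, eval₂_eq, Finset.mul_sum]
  refine Finset.sum_congr rfl fun m hm => ?_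
  have hd : ∑ i ∈ m.support, m i = d := (hh.degree_eq_sum_deg_support hm).symm
  have : ∏ i ∈ m.support, (c * x i) ^ m i = c ^ d * ∏ i ∈ m.support, x i ^ m i := by
    simp_rw [mul_pow]
    rw [Finset.prod_mul_distrib, Finset.prod_pow_eq_pow_sum, hd]
  rw [this]; ring

theorem aeval_scale_of {A : Type} [CommRing A] [Algebra k A] {d : ℕ} {h : MvPolynomial ι k}
    (hh : h.IsHomogeneous d) (c : A) (x y : ι → A) (hy : ∀ i, y i = c * x i) :
    aeval y h = c ^ d * aeval x h := by
  rw [← aeval_scale hh, show y = fun i => c * x i from funext hy]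

theorem aeval_aeval' {A : Type} [CommRing A] [Algebra k A]
    (F : κ → MvPolynomial ι k) (x : ι → A) (h : MvPolynomial κ k) :
    aeval x (aeval F h) = aeval (fun j => aeval x (F j)) h := by
  rw [← comp_aeval_apply]

theorem homog_aeval {d a : ℕ} {h : MvPolynomial κ k} (hh : h.IsHomogeneous d)
    {F : κ → MvPolynomial ι k} (hF : ∀ j, (F j).IsHomogeneous a) :
    (aeval F h).IsHomogeneous (a * d) := by
  exact hh.aeval F hF

/-- Factor of a homogeneous polynomial by a homogeneous one is homogeneous. -/
theorem homog_of_mul {d e : ℕ} {f g : MvPolynomial ι k} (hf : f.IsHomogeneous d) (hf0 : f ≠ 0)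
    (hfg : (f * g).IsHomogeneous e) : g.IsHomogeneous (e - d) := by
  classical
  letI := MvPolynomial.gradedAlgebra (σ := ι) (R := k)
  by_cases hg : g = 0
  · subst hg; exact isHomogeneous_zero _ _ _
  have hne : f * g ≠ 0 := mul_ne_zero hf0 hg
  have hde : d ≤ e := by
    by_contra hlt
    have h1 := DirectSum.coe_decompose_mul_of_left_mem_of_not_le (homogeneousSubmodule ι k)
      (a := f) (b := g) (i := d) (n := e) ((mem_homogeneousSubmodule _ _).2 hf) hlt
    have h2 := DirectSum.decompose_of_mem_same (homogeneousSubmodule ι k)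
      ((mem_homogeneousSubmodule _ _).2 hfg)
    exact hne (h2.symm.trans h1)
  have h1 := DirectSum.coe_decompose_mul_of_left_mem_of_le (homogeneousSubmodule ι k)
      (a := f) (b := g) (i := d) (n := e) ((mem_homogeneousSubmodule _ _).2 hf) hde
  have h2 := DirectSum.decompose_of_mem_same (homogeneousSubmodule ι k)
      ((mem_homogeneousSubmodule _ _).2 hfg)
  have h3 := mul_left_cancel₀ hf0 (h2.symm.trans h1)
  rw [h3]
  exact (mem_homogeneousSubmodule _ _).1 (SetLike.coe_mem _)

/-- Mutually quasi-inverse homogeneous tuples. -/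
structure Crm (F G : ι → MvPolynomial ι k) (W W' : MvPolynomial ι k) : Prop where
  hF : ∃ a, ∀ j, (F j).IsHomogeneous a
  hG : ∃ b, ∀ j, (G j).IsHomogeneous b
  fg : ∀ i, aeval F (G i) = W * X i
  gf : ∀ i, aeval G (F i) = W' * X i

theorem Crm.symm {F G : ι → MvPolynomial ι k} {W W' : MvPolynomial ι k} (h : Crm F G W W') :
    Crm G F W' W := ⟨h.hG, h.hF, h.gf, h.fg⟩

theorem Crm.homogW [Nonempty ι] {F G : ι → MvPolynomial ι k} {W W' : MvPolynomial ι k}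
    (h : Crm F G W W') : ∃ w, W.IsHomogeneous w := by
  obtain ⟨a, ha⟩ := h.hF
  obtain ⟨b, hb⟩ := h.hG
  obtain ⟨i⟩ := ‹Nonempty ι›
  have h1 := homog_aeval (hb i) ha
  rw [h.fg, mul_comm] at h1
  exact ⟨_, homog_of_mul (isHomogeneous_X k i) (X_ne_zero i) h1⟩

theorem Crm.fgh {F G : ι → MvPolynomial ι k} {W W' : MvPolynomial ι k} (h : Crm F G W W')
    {d : ℕ} {p : MvPolynomial ι k} (hp : p.IsHomogeneous d) :
    aeval F (aeval G p) = W ^ d * p := by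
  rw [aeval_aeval', aeval_scale_of hp W X _ h.fg]
  simp

/-- composition: first `F₁`, then `F₂`. -/
theorem Crm.trans {F₁ G₁ F₂ G₂ : ι → MvPolynomial ι k} {W₁ W₁' W₂ W₂' : MvPolynomial ι k}
    (h₁ : Crm F₁ G₁ W₁ W₁') (h₂ : Crm F₂ G₂ W₂ W₂') :
    ∃ e e', Crm (fun j => aeval F₁ (F₂ j)) (fun j => aeval G₂ (G₁ j))
      (aeval F₁ W₂ ^ e * W₁) (aeval G₂ W₁' ^ e' * W₂') := by
  obtain ⟨a₁, ha₁⟩ := h₁.hF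
  obtain ⟨b₁, hb₁⟩ := h₁.hG
  obtain ⟨a₂, ha₂⟩ := h₂.hF
  obtain ⟨b₂, hb₂⟩ := h₂.hG
  refine ⟨b₁, a₂, ⟨_, fun j => homog_aeval (ha₂ j) ha₁⟩, ⟨_, fun j => homog_aeval (hb₁ j) hb₂⟩,
    fun i => ?_, fun i => ?_⟩
  · rw [← aeval_aeval', h₂.fgh (hb₁ i), map_mul, map_pow, h₁.fg, mul_assoc]
  · rw [← aeval_aeval', h₁.symm.fgh (ha₂ i), map_mul, map_pow, h₂.gf, mul_assoc]

variable {K : Type} [Field K] [Algebra k K]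

/-- The `K`-points `ξ`, `η` correspond under a Cremona map which is a local isomorphism there. -/
def E (k : Type) [Field k] {ι K : Type} [Field K] [Algebra k K] (ξ η : ι → K) : Prop :=
  ∃ F G W W', Crm (k := k) F G W W' ∧ (∃ l : K, l ≠ 0 ∧ ∀ j, aeval ξ (F j) = l * η j) ∧
    (∃ l : K, l ≠ 0 ∧ ∀ j, aeval η (G j) = l * ξ j)

theorem E.symm {ξ η : ι → K} (h : E k ξ η) : E k η ξ := by
  obtain ⟨F, G, W, W', h, h1, h2⟩ := h
  exact ⟨G, F, W', W, h.symm, h2, h1⟩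

theorem E.trans {ξ η ζ : ι → K} (h : E k ξ η) (h' : E k η ζ) : E k ξ ζ := by
  obtain ⟨F, G, W, W', h, ⟨l, hl, h1⟩, ⟨m, hm, h2⟩⟩ := h
  obtain ⟨F', G', V, V', h', ⟨l', hl', h1'⟩, ⟨m', hm', h2'⟩⟩ := h'
  obtain ⟨e, e', H⟩ := h.trans h'
  obtain ⟨a, ha⟩ := h'.hF
  obtain ⟨b, hb⟩ := h.hG
  refine ⟨_, _, _, _, H, ⟨l ^ a * l', by positivity, fun j => ?_⟩,
    ⟨m' ^ b * m, by positivity, fun j => ?_⟩⟩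
  · rw [aeval_aeval', aeval_scale_of (ha j) l η _ h1, h1', mul_assoc]
  · rw [aeval_aeval', aeval_scale_of (hb j) m' η _ h2', h2, mul_assoc]

theorem E.refl (ξ : ι → K) : E k ξ ξ :=
  ⟨X, X, 1, 1, ⟨⟨1, isHomogeneous_X k⟩, ⟨1, isHomogeneous_X k⟩, by simp, by simp⟩,
    ⟨1, one_ne_zero, by simp⟩, ⟨1, one_ne_zero, by simp⟩⟩

theorem E.perm (ξ : ι → K) (σ : Equiv.Perm ι) : E k ξ (ξ ∘ σ) :=
  ⟨fun i => X (σ i), fun i => X (σ.symm i), 1, 1,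
    ⟨⟨1, fun _ => isHomogeneous_X k _⟩, ⟨1, fun _ => isHomogeneous_X k _⟩, by simp, by simp⟩,
    ⟨1, one_ne_zero, by simp⟩, ⟨1, one_ne_zero, by simp⟩⟩

end basic

end ConeCrem

namespace ConeCrem

open MvPolynomial

section move

variable {k : Type} [Field k] {ι : Type} {K : Type} [Field K] [Algebra k K]

theorem rename_eq_aeval' {σ τ : Type} (f : σ → τ) (p : MvPolynomial σ k) :
    rename f p = aeval (fun j => (X (f j) : MvPolynomial τ k)) p := by
  have := DFunLike.congr_fun (aeval_unique (rename (R := k) f)) p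
  rw [this]
  congr 2
  funext j
  simp

theorem exists_homog_frac {σ : Type} (x : σ → K) (i₀ : σ) (hi₀ : x i₀ = 1) {z : K}
    (hz : z ∈ IntermediateField.adjoin k (Set.range x)) :
    ∃ (D : ℕ) (a b : MvPolynomial σ k), a.IsHomogeneous D ∧ b.IsHomogeneous D ∧
      aeval x b ≠ 0 ∧ z * aeval x b = aeval x a := by
  induction hz using IntermediateField.adjoin_induction with
  | mem z hz =>
    obtain ⟨i, rfl⟩ := hz
    exact ⟨1, X i, X i₀, isHomogeneous_X k _, isHomogeneous_X k _, by simp [hi₀], by simp [hi₀]⟩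
  | algebraMap c =>
    exact ⟨0, C c, 1, isHomogeneous_C _ _, isHomogeneous_one _ _, by simp, by simp⟩
  | add z w _ _ hz hw =>
    obtain ⟨D, a, b, ha, hb, h0, h⟩ := hz
    obtain ⟨D', a', b', ha', hb', h0', h'⟩ := hw
    refine ⟨D + D', a * b' + b * a', b * b', (ha.mul hb').add (hb.mul ha'), hb.mul hb', ?_, ?_⟩
    · rw [map_mul]; exact mul_ne_zero h0 h0'
    · simp only [map_add, map_mul, ← h, ← h']; ring
  | inv z _ hz =>
    obtain ⟨D, a, b, ha, hb, h0, h⟩ := hz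
    by_cases hz0 : z = 0
    · subst hz0
      exact ⟨0, 0, 1, isHomogeneous_zero _ _ _, isHomogeneous_one _ _, by simp, by simp⟩
    · refine ⟨D, b, a, hb, ha, ?_, ?_⟩
      · rw [← h]; exact mul_ne_zero hz0 h0
      · rw [← h]; field_simp
  | mul z w _ _ hz hw =>
    obtain ⟨D, a, b, ha, hb, h0, h⟩ := hz
    obtain ⟨D', a', b', ha', hb', h0', h'⟩ := hw
    refine ⟨D + D', a * a', b * b', (ha.mul ha'), hb.mul hb', ?_, ?_⟩
    · rw [map_mul]; exact mul_ne_zero h0 h0'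
    · simp only [map_mul, ← h, ← h']; ring

theorem E.move_one [DecidableEq ι] (ξ : ι → K) (s : Set ι) (i₀ : ι) (hi₀ : i₀ ∈ s)
    (h1 : ξ i₀ = 1)
    (hs : IntermediateField.adjoin k (ξ '' s) = ⊤) (i : ι) (hi : i ∉ s) (z : K) :
    E k ξ (Function.update ξ i z) := by
  have hz : z - ξ i ∈ IntermediateField.adjoin k (Set.range fun j : s => ξ j) := by
    rw [show (Set.range fun j : s => ξ j) = ξ '' s by ext; simp, hs]; trivial
  obtain ⟨D, a, b, ha, hb, hb0, hab⟩ := exists_homog_frac (fun j : s => ξ j) ⟨i₀, hi₀⟩ h1 hz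
  set A : MvPolynomial ι k := rename Subtype.val a * X i₀ with hA
  set B : MvPolynomial ι k := rename Subtype.val b with hB
  have hAh : A.IsHomogeneous (D + 1) := ha.rename_isHomogeneous.mul (isHomogeneous_X k _)
  have hBh : B.IsHomogeneous D := hb.rename_isHomogeneous
  have hne : ∀ j : s, (j : ι) ≠ i := fun j h => hi (h ▸ j.2)
  have hi₀i : i₀ ≠ i := fun h => hi (h ▸ hi₀)
  -- evaluating the polynomials in the variables of `s`
  have key : ∀ T : ι → MvPolynomial ι k, (∀ j : s, T j = B * X (j : ι)) →
      aeval T A = B ^ (D + 1) * A ∧ aeval T B = B ^ D * B := by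
    intro T hT
    constructor
    · rw [hA, map_mul, aeval_rename, aeval_scale_of ha B (fun j : s => X (j : ι)) (T ∘ Subtype.val) (fun j => hT j),
        aeval_X, hT ⟨i₀, hi₀⟩]
      rw [rename_eq_aeval']
      ring
    · conv_lhs => rw [hB]
      rw [aeval_rename, aeval_scale_of hb B (fun j : s => X (j : ι)) (T ∘ Subtype.val) (fun j => hT j)]
      rw [hB, rename_eq_aeval']
  have hX : ∀ j, (B * X j).IsHomogeneous (D + 1) := fun j => hBh.mul (isHomogeneous_X k _)
  have evA : ∀ x : ι → K, (∀ j : s, x j = ξ j) → aeval x A = (z - ξ i) * aeval x B ∧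
      aeval x B ≠ 0 := by
    intro x hx
    have hx' : x ∘ Subtype.val = fun j : s => ξ j := funext hx
    rw [hA, hB, map_mul, aeval_rename, aeval_rename, aeval_X, hx', hx ⟨i₀, hi₀⟩, h1, hab]
    exact ⟨mul_one _, hb0⟩
  have hup : ∀ j : s, Function.update ξ i z j = ξ j := fun j => Function.update_of_ne (hne j) _ _
  refine ⟨Function.update (fun j => B * X j) i (B * X i + A),
    Function.update (fun j => B * X j) i (B * X i - A), B ^ D * B * B, B ^ D * B * B,
    ⟨⟨D + 1, fun j => ?_⟩, ⟨D + 1, fun j => ?_⟩, fun j => ?_, fun j => ?_⟩,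
    ⟨aeval ξ B, (evA ξ fun _ => rfl).2, fun j => ?_⟩,
    ⟨aeval (Function.update ξ i z) B, (evA _ hup).2, fun j => ?_⟩⟩
  · by_cases hj : j = i
    · subst hj; simpa using (hX j).add hAh
    · simpa [hj] using hX j
  · by_cases hj : j = i
    · subst hj; simpa using (hX j).sub hAh
    · simpa [hj] using hX j
  · obtain ⟨k1, k2⟩ := key (Function.update (fun j => B * X j) i (B * X i + A))
      (fun j => Function.update_of_ne (hne j) _ _)
    by_cases hj : j = i
    · subst hj
      simp only [Function.update_self, map_sub, map_mul, aeval_X, k1, k2]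
      ring
    · simp only [ne_eq, hj, not_false_eq_true, Function.update_of_ne, map_mul, aeval_X, k2]
      ring
  · obtain ⟨k1, k2⟩ := key (Function.update (fun j => B * X j) i (B * X i - A))
      (fun j => Function.update_of_ne (hne j) _ _)
    by_cases hj : j = i
    · subst hj
      simp only [Function.update_self, map_add, map_mul, aeval_X, k1, k2]
      ring
    · simp only [ne_eq, hj, not_false_eq_true, Function.update_of_ne, map_mul, aeval_X, k2]
      ring
  · by_cases hj : j = i
    · subst hj
      simp only [Function.update_self, map_add, map_mul, aeval_X, (evA ξ fun _ => rfl).1]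
      ring
    · simp [hj]
  · by_cases hj : j = i
    · subst hj
      simp only [Function.update_self, map_sub, map_mul, aeval_X, (evA _ hup).1]
      ring
    · simp [hj]

theorem E.move [Finite ι] (ξ η : ι → K) (s : Set ι) (i₀ : ι) (hi₀ : i₀ ∈ s)
    (h1 : ξ i₀ = 1) (hs : IntermediateField.adjoin k (ξ '' s) = ⊤)
    (hag : ∀ j ∈ s, η j = ξ j) : E k ξ η := by
  classical
  have := Fintype.ofFinite ι
  suffices H : ∀ t : Finset ι, E k ξ (t.piecewise η ξ) by
    simpa using H Finset.univ
  intro t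
  induction t using Finset.induction_on with
  | empty => simpa using E.refl ξ
  | insert i t hit ih =>
    rw [Finset.piecewise_insert]
    by_cases hi : i ∈ s
    · have : Function.update (t.piecewise η ξ) i (η i) = t.piecewise η ξ := by
        rw [Function.update_eq_self_iff, Finset.piecewise_eq_of_notMem _ _ _ hit, hag i hi]
      rwa [this]
    · have hag' : ∀ j ∈ s, t.piecewise η ξ j = ξ j := by
        intro j hj
        by_cases hjt : j ∈ t
        · simp [hjt, hag j hj]
        · simp [hjt]
      refine ih.trans (E.move_one _ s i₀ hi₀ ((hag' _ hi₀).trans h1) ?_ i hi _)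
      rw [Set.image_congr hag', hs]

end move

end ConeCrem

namespace ConeCrem

open MvPolynomial

section chain

variable {k : Type} [Field k] {K : Type} [Field K] [Algebra k K]

theorem finite_over_basis [CharZero k] [Algebra.EssFiniteType k K] {r : ℕ} {b : Fin r → K}
    (hb : IsTranscendenceBasis k b) :
    Finite (IntermediateField (IntermediateField.adjoin k (Set.range b)) K) := by
  have := hb.isAlgebraic_field
  have : Algebra.EssFiniteType (IntermediateField.adjoin k (Set.range b)) K :=
    Algebra.EssFiniteType.of_comp k _ _
  have : Module.Finite (IntermediateField.adjoin k (Set.range b)) K :=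
    Algebra.finite_of_essFiniteType_of_isAlgebraic
  exact Field.finite_intermediateField_of_exists_primitive_element _ _
    (Field.exists_primitive_element _ _)

theorem exists_common_prim [CharZero k] [Algebra.EssFiniteType k K] {r r' : ℕ} {b : Fin r → K}
    {b' : Fin r' → K} (hb : IsTranscendenceBasis k b) (hb' : IsTranscendenceBasis k b') :
    ∃ p, IntermediateField.adjoin k (Set.range b ∪ {p}) = ⊤ ∧
      IntermediateField.adjoin k (Set.range b' ∪ {p}) = ⊤ := by
  have := finite_over_basis hb
  have := finite_over_basis hb'
  let I := {N : IntermediateField (IntermediateField.adjoin k (Set.range b)) K // N ≠ ⊤} ⊕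
    {N : IntermediateField (IntermediateField.adjoin k (Set.range b')) K // N ≠ ⊤}
  let P : I → Subspace k K := Sum.elim
    (fun N => Subalgebra.toSubmodule (N.1.restrictScalars k).toSubalgebra)
    (fun N => Subalgebra.toSubmodule (N.1.restrictScalars k).toSubalgebra)
  have hP : ∀ i, P i ≠ ⊤ := by
    rintro (⟨N, hN⟩ | ⟨N, hN⟩) h
    all_goals
      apply hN
      rw [eq_top_iff]
      intro z _
      have : z ∈ (⊤ : Subspace k K) := trivial
      rw [← h] at this
      exact this
  have hU : ⋃ i, (P i : Set K) ≠ Set.univ := by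
    intro h
    obtain ⟨i, hi⟩ := Subspace.exists_eq_top_of_iUnion_eq_univ h
    exact hP i hi
  obtain ⟨p, hp⟩ := (Set.ne_univ_iff_exists_notMem _).1 hU
  simp only [Set.mem_iUnion, not_exists] at hp
  refine ⟨p, ?_, ?_⟩
  · rw [← IntermediateField.adjoin_adjoin_left]
    by_contra hne
    refine hp (Sum.inl ⟨IntermediateField.adjoin _ {p}, fun h => hne ?_⟩) ?_
    · rw [h]; rfl
    · exact IntermediateField.subset_adjoin _ _ (Set.mem_singleton p)
  · rw [← IntermediateField.adjoin_adjoin_left]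
    by_contra hne
    refine hp (Sum.inr ⟨IntermediateField.adjoin _ {p}, fun h => hne ?_⟩) ?_
    · rw [h]; rfl
    · exact IntermediateField.subset_adjoin _ _ (Set.mem_singleton p)

theorem E.transport {ι ι' : Type} {ξ η : ι → K} (h : E k ξ η) (e : ι' ≃ ι) :
    E k (ξ ∘ e) (η ∘ e) := by
  obtain ⟨F, G, W, W', h, ⟨l, hl, h1⟩, ⟨m, hm, h2⟩⟩ := h
  have aux : ∀ (F G : ι → MvPolynomial ι k) (W : MvPolynomial ι k), (∀ i, aeval F (G i) = W * X i) →
      ∀ i : ι', aeval (fun j : ι' => rename e.symm (F (e j))) (rename e.symm (G (e i))) =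
        rename e.symm W * X i := by
    intro F G W h i
    rw [aeval_rename]
    have : (fun j : ι' => rename e.symm (F (e j))) ∘ e.symm = fun j => rename e.symm (F j) := by
      funext j; simp
    rw [this, ← comp_aeval_apply, h]
    simp
  have ev : ∀ (ξ : ι → K) (p : MvPolynomial ι k), aeval (ξ ∘ e) (rename e.symm p) = aeval ξ p := by
    intro ξ p
    rw [aeval_rename]; congr 2; funext j; simp
  obtain ⟨a, ha⟩ := h.hF
  obtain ⟨b, hb⟩ := h.hG
  refine ⟨fun j => rename e.symm (F (e j)), fun j => rename e.symm (G (e j)), rename e.symm W,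
    rename e.symm W', ⟨⟨a, fun j => (ha _).rename_isHomogeneous⟩,
      ⟨b, fun j => (hb _).rename_isHomogeneous⟩, aux _ _ _ h.fg, aux _ _ _ h.gf⟩,
    ⟨l, hl, fun j => ?_⟩, ⟨m, hm, fun j => ?_⟩⟩
  · rw [ev, h1]; rfl
  · rw [ev, h2]; rfl

/-- normal form vector -/
def V {r : ℕ} {R : Type} (b : Fin r → K) (p q : K) : Fin r ⊕ (Fin 3 ⊕ R) → K :=
  Sum.elim b (Sum.elim ![1, p, q] 0)

variable {r : ℕ} {R : Type} [Finite R]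

theorem E.Vmove {b : Fin r → K} {p : K} 
    (h : IntermediateField.adjoin k (Set.range b ∪ {p}) = ⊤)
    (η : Fin r ⊕ (Fin 3 ⊕ R) → K) (h1 : ∀ i, η (.inl i) = b i) (h2 : η (.inr (.inl 0)) = 1)
    (h3 : η (.inr (.inl 1)) = p) (q : K) : E k η (V b p q) := by
  refine E.move η _ (Set.range Sum.inl ∪ {.inr (.inl 0), .inr (.inl 1)}) (.inr (.inl 0))
    (by simp) h2 ?_ ?_
  · rw [eq_top_iff, ← h]
    apply IntermediateField.adjoin.mono
    rintro _ (⟨i, rfl⟩ | rfl)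
    · exact ⟨.inl i, by simp, h1 i⟩
    · exact ⟨.inr (.inl 1), by simp, h3⟩
  · rintro j (⟨i, rfl⟩ | rfl | rfl)
    · simp [V, h1]
    · simp [V, h2]
    · simp [V, h3]

theorem E.Vprim {b : Fin r → K} {p p' : K} 
    (h : IntermediateField.adjoin k (Set.range b ∪ {p}) = ⊤)
    (h' : IntermediateField.adjoin k (Set.range b ∪ {p'}) = ⊤) (q q' : K) :
    E k (V (R := R) b p q) (V b p' q') := by
  classical
  have e1 : E k (V (R := R) b p q) (V b p p') := E.Vmove h _ (by simp [V]) (by simp [V]) (by simp [V]) _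
  have e2 := E.perm (k := k) (V (R := R) b p p') (Equiv.swap (.inr (.inl 1)) (.inr (.inl 2)))
  refine (e1.trans e2).trans (E.Vmove h' _ ?_ ?_ ?_ _)
  · intro i
    simp only [Function.comp]
    rw [Equiv.swap_apply_of_ne_of_ne (by simp) (by simp)]; simp [V]
  · simp only [Function.comp]
    rw [Equiv.swap_apply_of_ne_of_ne (by simp) (by simp)]; simp [V]
  · simp [V]

theorem E.Vexch [CharZero k] [Algebra.EssFiniteType k K] {b : Fin r → K} {p p' f : K} {i : Fin r}
    (hb : IsTranscendenceBasis k b) (hb' : IsTranscendenceBasis k (Function.update b i f))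
    (h : IntermediateField.adjoin k (Set.range b ∪ {p}) = ⊤)
    (h' : IntermediateField.adjoin k (Set.range (Function.update b i f) ∪ {p'}) = ⊤) (q q' : K) :
    E k (V (R := R) b p q) (V (Function.update b i f) p' q') := by
  classical
  obtain ⟨t, ht, ht'⟩ := exists_common_prim hb hb'
  have e1 : E k (V (R := R) b p q) (V b t f) := E.Vprim h ht _ _
  have e2 := E.perm (k := k) (V (R := R) b t f) (Equiv.swap (.inl i) (.inr (.inl 2)))
  refine ((e1.trans e2).trans (E.Vmove ht' _ ?_ ?_ ?_ q)).trans (E.Vprim ht' h' q q')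
  · intro j
    by_cases hj : j = i
    · subst hj; simp [V]
    · simp only [Function.comp]
      rw [Equiv.swap_apply_of_ne_of_ne (by simp [hj]) (by simp)]; simp [V, hj]
  · simp only [Function.comp]
    rw [Equiv.swap_apply_of_ne_of_ne (by simp) (by simp)]; simp [V]
  · simp only [Function.comp]
    rw [Equiv.swap_apply_of_ne_of_ne (by simp) (by simp)]; simp [V]

theorem E.Vall [CharZero k] [Algebra.EssFiniteType k K] (m : ℕ) {b b' : Fin r → K} {p p' : K}
    (hb : IsTranscendenceBasis k b) (hb' : IsTranscendenceBasis k b')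
    (h : IntermediateField.adjoin k (Set.range b ∪ {p}) = ⊤)
    (h' : IntermediateField.adjoin k (Set.range b' ∪ {p'}) = ⊤) (q q' : K)
    (hm : (Set.range b \ Set.range b').ncard = m) :
    E k (V (R := R) b p q) (V b' p' q') := by
  classical
  have inj : Function.Injective b := hb.1.injective
  have inj' : Function.Injective b' := hb'.1.injective
  induction m generalizing b p q with
  | zero =>
    rw [Set.ncard_eq_zero (Set.toFinite _), Set.sdiff_eq_empty] at hm
    have hr : Set.range b = Set.range b' := by
      apply Set.eq_of_subset_of_ncard_le hm
      rw [Set.ncard_range_of_injective inj, Set.ncard_range_of_injective inj']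
    let σ : Equiv.Perm (Fin r) := (Equiv.ofInjective b' inj').trans
      ((Equiv.setCongr hr.symm).trans (Equiv.ofInjective b inj).symm)
    have hσ : ∀ i, b (σ i) = b' i := by
      intro i
      simp only [σ, Equiv.trans_apply]
      exact (Equiv.apply_ofInjective_symm inj _).trans rfl
    have e := E.perm (k := k) (V (R := R) b p q) (Equiv.sumCongr σ (Equiv.refl _))
    refine e.trans ((E.Vmove (p := p) (b := b') ?_ _ ?_ ?_ ?_ q).trans (E.Vprim ?_ h' q q'))
    · rw [← hr, h]
    · intro i; simp [V, hσ]
    · simp [V]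
    · simp [V]
    · rw [← hr, h]
  | succ m ih =>
    have hne : (Set.range b \ Set.range b').Nonempty := by
      rw [← Set.ncard_pos (Set.toFinite _)]; omega
    obtain ⟨z, hz, hz'⟩ := hne
    have B : (AlgebraicIndependent.matroid k K).IsBase (Set.range b) := by
      rw [AlgebraicIndependent.matroid_isBase_iff]; exact hb.to_subtype_range
    have B' : (AlgebraicIndependent.matroid k K).IsBase (Set.range b') := by
      rw [AlgebraicIndependent.matroid_isBase_iff]; exact hb'.to_subtype_range
    obtain ⟨f, ⟨hf, hf'⟩, hB⟩ := B.exchange B' ⟨hz, hz'⟩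
    obtain ⟨i, rfl⟩ := hz
    have hrange : Set.range (Function.update b i f) = insert f (Set.range b \ {b i}) := by
      ext w
      constructor
      · rintro ⟨j, rfl⟩
        by_cases hj : j = i
        · subst hj; simp
        · right; simp [hj, inj.eq_iff]
      · rintro (rfl | ⟨⟨j, rfl⟩, hj⟩)
        · exact ⟨i, by simp⟩
        · have : j ≠ i := fun h => hj (by simp [h])
          exact ⟨j, by simp [this]⟩
    have injc : Function.Injective (Function.update b i f) := by
      intro j l hjl
      by_cases hj : j = i <;> by_cases hl : l = i
      · rw [hj, hl]
      · subst hj; rw [Function.update_self, Function.update_of_ne hl] at hjl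
        exact absurd ⟨l, hjl.symm⟩ hf'
      · subst hl; rw [Function.update_self, Function.update_of_ne hj] at hjl
        exact absurd ⟨j, hjl⟩ hf'
      · rw [Function.update_of_ne hl, Function.update_of_ne hj] at hjl
        exact inj hjl
    have hc : IsTranscendenceBasis k (Function.update b i f) := by
      rw [AlgebraicIndependent.matroid_isBase_iff, ← hrange] at hB
      exact IsTranscendenceBasis.of_subtype_range injc hB
    obtain ⟨t, ht, -⟩ := exists_common_prim hc hc
    refine (E.Vexch hb hc h ht q q).trans (ih hc ht q ?_ injc)
    have : Set.range b \ Set.range b' = insert (b i) (Set.range (Function.update b i f) \ Set.range b') := by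
      rw [hrange]
      ext w
      simp only [Set.mem_sdiff, Set.mem_insert_iff, Set.mem_singleton_iff]
      constructor
      · rintro ⟨h1, h2⟩
        by_cases hw : w = b i
        · exact Or.inl hw
        · exact Or.inr ⟨Or.inr ⟨h1, hw⟩, h2⟩
      · rintro (rfl | ⟨rfl | ⟨h1, -⟩, h2⟩)
        · exact ⟨⟨i, rfl⟩, hz'⟩
        · exact absurd hf h2
        · exact ⟨h1, h2⟩
    rw [this, Set.ncard_insert_of_notMem _ (Set.toFinite _)] at hm
    · omega
    · rintro ⟨h1, -⟩
      rw [hrange] at h1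
      rcases h1 with h1 | h1
      · exact hz' (h1 ▸ hf)
      · exact h1.2 rfl

end chain

end ConeCrem

namespace ConeCrem

open MvPolynomial

section chain

variable {k : Type} [Field k] {K : Type} [Field K] [Algebra k K]

theorem exists_sub_basis {n : ℕ} (x : Fin n → K) (i₀ : Fin n) (h1 : x i₀ = 1)
    (hx : IntermediateField.adjoin k (Set.range x) = ⊤) :
    ∃ (r : ℕ) (c : Fin r → Fin n), Function.Injective c ∧ (∀ i, c i ≠ i₀) ∧
      IsTranscendenceBasis k (x ∘ c) := by
  let s : Set K := x '' {j | j ≠ i₀}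
  have hs : IntermediateField.adjoin k s = ⊤ := by
    rw [eq_top_iff, ← hx, IntermediateField.adjoin_le_iff]
    rintro _ ⟨j, rfl⟩
    by_cases hj : j = i₀
    · rw [hj, h1]; exact one_mem _
    · exact IntermediateField.subset_adjoin _ _ ⟨j, hj, rfl⟩
  have : Algebra.IsAlgebraic (Algebra.adjoin k s) K := by
    constructor
    intro z
    have hz : z ∈ IntermediateField.adjoin k s := by rw [hs]; trivial
    induction hz using IntermediateField.adjoin_induction with
    | mem z hz =>
      exact isAlgebraic_algebraMap (⟨z, Algebra.subset_adjoin hz⟩ : Algebra.adjoin k s)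
    | algebraMap c =>
      exact isAlgebraic_algebraMap (algebraMap k (Algebra.adjoin k s) c)
    | add _ _ _ _ h h' => exact h.add h'
    | mul _ _ _ _ h h' => exact h.mul h'
    | inv _ _ h => exact h.inv
  obtain ⟨t, hts, ht⟩ := exists_isTranscendenceBasis_subset (R := k) s
  have htf : t.Finite := Set.Finite.subset (Set.toFinite s) hts
  have := htf.to_subtype
  obtain ⟨r, ⟨e⟩⟩ := Finite.exists_equiv_fin t
  have hc : ∀ i : Fin r, ∃ j, j ≠ i₀ ∧ x j = e.symm i := fun i => by
    obtain ⟨j, hj, hj'⟩ := hts (e.symm i).2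
    exact ⟨j, hj, hj'⟩
  choose c hc1 hc2 using hc
  have hxc : x ∘ c = Subtype.val ∘ e.symm := funext hc2
  refine ⟨r, c, ?_, hc1, ?_⟩
  · apply Function.Injective.of_comp (f := x)
    rw [hxc]
    exact Subtype.val_injective.comp e.symm.injective
  · rw [hxc]
    exact (isTranscendenceBasis_equiv e.symm).2 ht

theorem chain_half [CharZero k] [Algebra.EssFiniteType k K] {n r : ℕ} {R : Type} [Finite R]
    (x : Fin n → K) (i₀ : Fin n) (h1 : x i₀ = 1)
    (hx : IntermediateField.adjoin k (Set.range x) = ⊤) (c : Fin r → Fin n)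
    (hc : Function.Injective c) (hc' : ∀ i, c i ≠ i₀) (hb : IsTranscendenceBasis k (x ∘ c))
    (e : Fin (n+1) ≃ Fin r ⊕ (Fin 3 ⊕ R)) :
    ∃ p, IntermediateField.adjoin k (Set.range (x ∘ c) ∪ {p}) = ⊤ ∧
      E k (Fin.cons 0 x : Fin (n+1) → K) (V (x ∘ c) p 0 ∘ e) := by
  obtain ⟨p, hp, -⟩ := exists_common_prim hb hb
  refine ⟨p, hp, ?_⟩
  have e1 : E k (Fin.cons 0 x : Fin (n+1) → K) (Fin.cons p x : Fin (n+1) → K) := by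
    refine E.move _ _ (Set.range Fin.succ) i₀.succ ⟨_, rfl⟩ (by simp [h1]) ?_ ?_
    · rw [← Set.range_comp]
      have : (Fin.cons 0 x : Fin (n+1) → K) ∘ Fin.succ = x := by funext j; simp
      rw [this, hx]
    · rintro _ ⟨j, rfl⟩; simp
  let g : Fin r ⊕ Fin 2 → Fin (n+1) := Sum.elim (fun i => (c i).succ) ![i₀.succ, 0]
  let g' : Fin r ⊕ Fin 2 → Fin (n+1) := 
    Sum.elim (fun i => e.symm (.inl i)) ![e.symm (.inr (.inl 0)), e.symm (.inr (.inl 1))]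
  have hg : Function.Injective g := by
    rintro (i | i) (j | j) hij
    · simpa [g, hc.eq_iff] using hij
    · fin_cases j <;> simp [g, hc'] at hij
    · fin_cases i
      · simp [g] at hij; exact absurd hij.symm (hc' _)
      · simp [g] at hij
        exact absurd hij.symm (Fin.succ_ne_zero _)
    · fin_cases i <;> fin_cases j <;> simp [g, Fin.succ_ne_zero] at hij ⊢
      exact absurd hij.symm (Fin.succ_ne_zero _)
  have hg' : Function.Injective g' := by
    rintro (i | i) (j | j) hij
    · simpa [g'] using hij
    · fin_cases j <;> simp [g'] at hij
    · fin_cases i <;> simp [g'] at hij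
    · fin_cases i <;> fin_cases j <;> simp [g'] at hij ⊢
  let τ : {z // z ∈ Set.range g'} ≃ {z // z ∈ Set.range g} := 
    (Equiv.ofInjective g' hg').symm.trans (Equiv.ofInjective g hg)
  let σ : Equiv.Perm (Fin (n+1)) := τ.extendSubtype
  have hσ : ∀ a, σ (g' a) = g a := by
    intro a
    simp only [σ]
    rw [Equiv.extendSubtype_apply_of_mem _ _ ⟨a, rfl⟩]
    simp only [τ, Equiv.trans_apply]
    rw [show (Equiv.ofInjective g' hg').symm ⟨g' a, ⟨a, rfl⟩⟩ = a from Equiv.ofInjective_symm_apply hg' a]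
    rfl
  have e2 := E.perm (k := k) (Fin.cons p x : Fin (n+1) → K) σ
  refine (e1.trans e2).trans ?_
  have e3 : E k (((Fin.cons p x : Fin (n+1) → K) ∘ σ) ∘ e.symm) (V (x ∘ c) p 0) := by
    refine E.Vmove hp _ ?_ ?_ ?_ 0
    · intro i
      have := hσ (.inl i)
      simp only [g', g, Sum.elim_inl] at this
      simp [this]
    · have := hσ (.inr 0)
      simp only [g', g, Sum.elim_inr, Matrix.cons_val_zero] at this
      simp [this, h1]
    · have : σ (e.symm (.inr (.inl 1))) = 0 := hσ (.inr 1)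
      simp [this]
  have e4 := e3.transport e
  have : ((((Fin.cons p x : Fin (n+1) → K) ∘ σ) ∘ e.symm) ∘ e) = (Fin.cons p x : Fin (n+1) → K) ∘ σ := by
    funext j; simp
  rwa [this] at e4

theorem basis_size [CharZero k] {n r : ℕ}
    (x : Fin n → K) (i₀ : Fin n) (h1 : x i₀ = 1) (c : Fin r → Fin n)
    (hc : Function.Injective c) (hc' : ∀ i, c i ≠ i₀) (hb : AlgebraicIndependent k (x ∘ c))
    {d : ℕ} {f : MvPolynomial (Fin n) k} (hf : f.IsHomogeneous d) (hf0 : f ≠ 0)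
    (hfx : aeval x f = 0) : r + 2 ≤ n := by
  classical
  have hinj : Function.Injective (Option.elim · i₀ c : Option (Fin r) → Fin n) := by
    rintro (_ | i) (_ | j) h
    · rfl
    · exact absurd h.symm (hc' j)
    · exact absurd h (hc' i)
    · exact congrArg some (hc h)
  have hcard := Fintype.card_le_of_injective _ hinj
  simp only [Fintype.card_option, Fintype.card_fin] at hcard
  rcases hcard.lt_or_eq with h | h
  · omega
  exfalso
  have hsurj : Function.Surjective (Option.elim · i₀ c : Option (Fin r) → Fin n) :=
    ((Fintype.bijective_iff_injective_and_card _).2 ⟨hinj, by simp [h]⟩).2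
  choose g hg using hsurj
  let T : Fin n → MvPolynomial (Fin r) k := fun j => Option.elim (g j) 1 X
  have hT : ∀ (A : Type) [CommRing A] [Algebra k A] (y : Fin n → A), y i₀ = 1 → ∀ j, 
      aeval (y ∘ c) (T j) = y j := by
    intro A _ _ y hy j
    have := hg j
    simp only [T]
    rcases hj : g j with _ | i
    · rw [hj] at this; simp at this; simp [← this, hy]
    · rw [hj] at this; simp at this; simp [← this]
  have hf' : aeval T f = 0 := by
    apply hb
    rw [map_zero, aeval_aeval']
    rw [show (fun j => aeval (x ∘ c) (T j)) = x from funext (hT K x h1), hfx]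
  have hne : f * X i₀ ≠ 0 := mul_ne_zero hf0 (X_ne_zero _)
  obtain ⟨z, hz⟩ : ∃ z, eval z (f * X i₀) ≠ 0 := by
    by_contra! hcon
    exact hne (MvPolynomial.funext (by simpa using hcon))
  rw [map_mul, eval_X] at hz
  have hz1 := left_ne_zero_of_mul hz
  have hz2 := right_ne_zero_of_mul hz
  have h3 := aeval_aeval' T ((fun j => (z i₀)⁻¹ * z j) ∘ c) f
  rw [show (fun j => aeval ((fun j => (z i₀)⁻¹ * z j) ∘ c) (T j)) = (fun j => (z i₀)⁻¹ * z j) from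
    funext (hT k (fun j => (z i₀)⁻¹ * z j) (by field_simp)), aeval_scale hf, hf', map_zero] at h3
  have : aeval z f ≠ 0 := by rwa [← MvPolynomial.coe_aeval_eq_eval] at hz1
  exact mul_ne_zero (pow_ne_zero _ (inv_ne_zero hz2)) this h3.symm

theorem chain [CharZero k] {n : ℕ} (x y : Fin n → K) (i₀ i₁ : Fin n) (hx1 : x i₀ = 1)
    (hy1 : y i₁ = 1) (hx : IntermediateField.adjoin k (Set.range x) = ⊤)
    (hy : IntermediateField.adjoin k (Set.range y) = ⊤)
    {d : ℕ} {f : MvPolynomial (Fin n) k} (hf : f.IsHomogeneous d) (hf0 : f ≠ 0)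
    (hfx : aeval x f = 0) : E k (Fin.cons 0 x : Fin (n+1) → K) (Fin.cons 0 y : Fin (n+1) → K) := by
  have : Algebra.EssFiniteType k K := by
    rw [← IntermediateField.fg_top_iff, ← hx]
    exact IntermediateField.fg_adjoin_of_finite (Set.finite_range _)
  obtain ⟨r, c, hc, hc', hb⟩ := exists_sub_basis x i₀ hx1 hx
  obtain ⟨r', c₂, hc₂, hc₂', hb₂⟩ := exists_sub_basis y i₁ hy1 hy
  have hr : r = r' := by
    have := hb.cardinalMk_eq hb₂
    simpa using this
  subst hr
  have hle := basis_size x i₀ hx1 c hc hc' hb.1 hf hf0 hfx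
  obtain ⟨e⟩ : Nonempty (Fin (n+1) ≃ Fin r ⊕ (Fin 3 ⊕ Fin (n - 2 - r))) := by
    rw [← Fintype.card_eq]; simp; omega
  obtain ⟨p, hp, e1⟩ := chain_half x i₀ hx1 hx c hc hc' hb e
  obtain ⟨p', hp', e2⟩ := chain_half y i₁ hy1 hy c₂ hc₂ hc₂' hb₂ e
  exact (e1.trans ((E.Vall _ hb hb₂ hp hp' 0 0 rfl).transport e)).trans e2.symm

end chain

end ConeCrem

namespace ConeCrem

open MvPolynomial

section lift

variable {k : Type} [Field k] {n : ℕ}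

/-- cylinder map -/
noncomputable abbrev Rn (p : MvPolynomial (Fin n) k) : MvPolynomial (Fin (n+1)) k := rename Fin.succ p

theorem Rn_mul (p q : MvPolynomial (Fin n) k) : Rn (p * q) = Rn p * Rn q := map_mul _ _ _

/-- restriction to `X 0 = c` -/
noncomputable def Nc (c : k) : MvPolynomial (Fin (n+1)) k →ₐ[k] MvPolynomial (Fin n) k :=
  aeval (Fin.cons (C c) X : Fin (n+1) → MvPolynomial (Fin n) k)

theorem Nc_Rn (c : k) (p : MvPolynomial (Fin n) k) : Nc c (Rn p) = p := by
  rw [Nc, aeval_rename]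
  have : (Fin.cons (C c) X : Fin (n+1) → MvPolynomial (Fin n) k) ∘ Fin.succ = X := by
    funext j; simp
  rw [this]; simp

theorem Nc_X0 (c : k) : Nc (n := n) c (X 0) = C c := by simp [Nc]

theorem Rn_dvd {p q : MvPolynomial (Fin n) k} : Rn p ∣ Rn q ↔ p ∣ q := by
  constructor
  · intro h
    have := map_dvd (Nc (n := n) (0 : k)) h
    rwa [Nc_Rn, Nc_Rn] at this
  · exact fun h => map_dvd (rename Fin.succ) h

theorem finSucc_Rn (p : MvPolynomial (Fin n) k) : finSuccEquiv k n (Rn p) = Polynomial.C p := by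
  induction p using MvPolynomial.induction_on with
  | C a => simp [Rn, finSuccEquiv_apply]
  | add p q hp hq => simp only [Rn, map_add] at *; rw [hp, hq]
  | mul_X p i hp => simp only [Rn, map_mul, rename_X] at *; rw [hp, finSuccEquiv_X_succ]

theorem Rn_prime {p : MvPolynomial (Fin n) k} (hp : Prime p) : Prime (Rn p) := by
  rw [← MulEquiv.prime_iff (finSuccEquiv k n).toMulEquiv]
  have : (finSuccEquiv k n).toMulEquiv (Rn p) = Polynomial.C p := finSucc_Rn p
  rw [this, Polynomial.prime_C_iff]
  exact hp

theorem sub_Rn (h : MvPolynomial (Fin (n+1)) k) : ∃ b, h = Rn (Nc 0 h) + X 0 * b := by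
  have : (Ideal.Quotient.mkₐ k (Ideal.span {(X 0 : MvPolynomial (Fin (n+1)) k)})) =
      ((Ideal.Quotient.mkₐ k (Ideal.span {(X 0 : MvPolynomial (Fin (n+1)) k)})).comp
        (rename Fin.succ)).comp (Nc (n := n) (0 : k)) := by
    ext i
    refine Fin.cases ?_ (fun j => ?_) i
    · simp [Nc_X0]
    · simp [Nc]
  have h2 := DFunLike.congr_fun this h
  simp only [AlgHom.comp_apply, Ideal.Quotient.mkₐ_eq_mk] at h2
  rw [Ideal.Quotient.eq, Ideal.mem_span_singleton] at h2
  obtain ⟨b, hb⟩ := h2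
  exact ⟨b, by rw [← hb]; ring⟩

theorem Nc_homog {h : MvPolynomial (Fin (n+1)) k} {e : ℕ} (hh : h.IsHomogeneous e) :
    (Nc 0 h).IsHomogeneous e := by
  have := homog_aeval hh (F := (Fin.cons (C 0) X : Fin (n+1) → MvPolynomial (Fin n) k)) (a := 1) ?_
  · simpa [Nc] using this
  · intro j
    refine Fin.cases ?_ (fun j => ?_) j
    · simp [isHomogeneous_zero]
    · simpa using isHomogeneous_X k j

/-- the map contracting the cone -/
noncomputable def bl (f L : MvPolynomial (Fin n) k) : Fin (n+1) → MvPolynomial (Fin (n+1)) k :=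
  Fin.cons (X 0 * Rn f) (fun j => X j.succ * Rn L)

theorem bl_zero (f L : MvPolynomial (Fin n) k) : bl f L 0 = X 0 * Rn f := rfl
theorem bl_succ (f L : MvPolynomial (Fin n) k) (j : Fin n) : bl f L j.succ = X j.succ * Rn L := rfl

theorem aeval_Rn_scale {A : Type} [CommRing A] [Algebra k A] {p : MvPolynomial (Fin n) k} {e : ℕ}
    (hp : p.IsHomogeneous e) (T : Fin (n+1) → A) (S : Fin (n+1) → A) (c : A)
    (hT : ∀ j : Fin n, T j.succ = c * S j.succ) :
    aeval T (Rn p) = c ^ e * aeval S (Rn p) := by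
  rw [aeval_rename, aeval_rename]
  exact aeval_scale_of hp c _ _ hT

theorem bl_Rn (f L : MvPolynomial (Fin n) k) {p : MvPolynomial (Fin n) k} {e : ℕ}
    (hp : p.IsHomogeneous e) : aeval (bl f L) (Rn p) = Rn L ^ e * Rn p := by
  rw [aeval_Rn_scale hp (bl f L) X (Rn L) (fun j => by rw [bl_succ]; ring)]
  simp

theorem dvd_pair {f a b : MvPolynomial (Fin n) k} (h : Rn f ∣ Rn a + X 0 * Rn b) :
    f ∣ a ∧ f ∣ b := by
  have h0 := map_dvd (Nc (n := n) (0 : k)) h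
  have h1 := map_dvd (Nc (n := n) (1 : k)) h
  rw [map_add, map_mul, Nc_Rn, Nc_Rn, Nc_Rn, Nc_X0] at h0 h1
  rw [map_zero, zero_mul, add_zero] at h0
  rw [map_one, one_mul] at h1
  exact ⟨h0, (dvd_add_right h0).1 h1⟩

structure Side (f L : MvPolynomial (Fin n) k) (d : ℕ) {K : Type} [Field K] [Algebra k K]
    (x : Fin n → K) : Prop where
  prime : Prime f
  homog : f.IsHomogeneous d
  homogL : L.IsHomogeneous d
  ndvd : ¬ f ∣ L
  gen : ∀ (h : MvPolynomial (Fin n) k) (e : ℕ), h.IsHomogeneous e → (aeval x h = 0 ↔ f ∣ h)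

variable {K : Type} [Field K] [Algebra k K]

theorem aeval_cons0 (x : Fin n → K) (h : MvPolynomial (Fin (n+1)) k) :
    aeval (Fin.cons 0 x : Fin (n+1) → K) h = aeval x (Nc 0 h) := by
  rw [Nc, aeval_aeval']
  congr 2
  funext j
  refine Fin.cases ?_ (fun j => ?_) j <;> simp

namespace Side

variable {f L : MvPolynomial (Fin n) k} {d : ℕ} {x : Fin n → K}

theorem gen' (S : Side f L d x) {h : MvPolynomial (Fin (n+1)) k} {e : ℕ} (hh : h.IsHomogeneous e) :
    aeval (Fin.cons 0 x : Fin (n+1) → K) h = 0 ↔ f ∣ Nc 0 h := by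
  rw [aeval_cons0, S.gen _ _ (Nc_homog hh)]

theorem nL (S : Side f L d x) : ¬ Rn f ∣ Rn L := fun h => S.ndvd (Rn_dvd.1 h)

theorem pr (S : Side f L d x) : Prime (Rn f) := Rn_prime S.prime

theorem bl_mod {h : MvPolynomial (Fin (n+1)) k} {e : ℕ} (hh : h.IsHomogeneous e) :
    ∃ c, aeval (bl f L) h = Rn L ^ e * Rn (Nc 0 h) + Rn f * c := by
  obtain ⟨b, hb⟩ := sub_Rn h
  refine ⟨X 0 * aeval (bl f L) b, ?_⟩
  conv_lhs => rw [hb, map_add, map_mul, aeval_X, bl_zero, bl_Rn f L (Nc_homog hh)]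
  ring

theorem one (S : Side f L d x) {h : MvPolynomial (Fin (n+1)) k} {e : ℕ} (hh : h.IsHomogeneous e) :
    Rn f ∣ aeval (bl f L) h ↔ aeval (Fin.cons 0 x : Fin (n+1) → K) h = 0 := by
  obtain ⟨c, hc⟩ := Side.bl_mod (f := f) (L := L) hh
  rw [S.gen' hh, hc, dvd_add_left (Dvd.intro _ rfl)]
  constructor
  · intro h
    rcases S.pr.dvd_or_dvd h with h | h
    · exact absurd (S.pr.dvd_of_dvd_pow h) S.nL
    · exact Rn_dvd.1 h
  · exact fun h => Dvd.dvd.mul_left (Rn_dvd.2 h) _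

theorem decomp (S : Side f L d x) {h : MvPolynomial (Fin (n+1)) k} {e : ℕ} (hh : h.IsHomogeneous e)
    (h0 : f ∣ Nc 0 h) : ∃ a b e' e'', a.IsHomogeneous e' ∧ b.IsHomogeneous e'' ∧
      h = Rn f * Rn a + X 0 * b := by
  obtain ⟨a, ha⟩ := h0
  obtain ⟨b, hb⟩ := sub_Rn h
  have hN := Nc_homog hh
  have h1 : (X 0 * b).IsHomogeneous e := by
    rw [show X 0 * b = h - Rn (Nc 0 h) by conv_rhs => (rw [hb]); simp [map_add, Nc_Rn, Nc_X0]]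
    exact hh.sub hN.rename_isHomogeneous
  refine ⟨a, b, _, _, homog_of_mul S.homog S.prime.ne_zero (ha ▸ hN),
    homog_of_mul (isHomogeneous_X k 0) (X_ne_zero _) h1, ?_⟩
  rw [← Rn_mul, ← ha]; exact hb

theorem mem_one (S : Side f L d x) {h : MvPolynomial (Fin (n+1)) k} {e : ℕ} (hh : h.IsHomogeneous e)
    (h0 : aeval (Fin.cons 0 x : Fin (n+1) → K) h = 0) : h ∈ Ideal.span {X 0, Rn f} := by
  obtain ⟨a, b, _, _, _, _, rfl⟩ := S.decomp hh ((S.gen' hh).1 h0)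
  rw [Ideal.mem_span_pair]
  exact ⟨b, Rn a, by ring⟩

theorem two (S : Side f L d x) {h : MvPolynomial (Fin (n+1)) k} {e : ℕ} (hh : h.IsHomogeneous e)
    (h2 : Rn f ^ 2 ∣ aeval (bl f L) h) : h ∈ (Ideal.span {X 0, Rn f}) ^ 2 := by
  have h1 : f ∣ Nc 0 h := by
    rw [← S.gen' hh, ← S.one hh]
    exact (dvd_pow_self _ two_ne_zero).trans h2
  obtain ⟨a, b, e', e'', ha, hb, rfl⟩ := S.decomp hh h1
  obtain ⟨c, hc⟩ := Side.bl_mod (f := f) (L := L) hb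
  obtain ⟨b', hb'⟩ := sub_Rn b
  rw [map_add, map_mul, map_mul, aeval_X, bl_zero, bl_Rn f L S.homog, bl_Rn f L ha, hc] at h2
  have h3 : Rn f * Rn f ∣ Rn f * ((Rn L ^ d * (Rn L ^ e' * Rn a) + X 0 * (Rn L ^ e'' * Rn (Nc 0 b)))
      + Rn f * (X 0 * c)) := by
    rw [← sq]; convert h2 using 1; ring
  have h4 := (mul_dvd_mul_iff_left S.pr.ne_zero).1 h3
  rw [dvd_add_left (Dvd.intro _ rfl)] at h4
  have h5 : Rn f ∣ Rn (L ^ d * (L ^ e' * a)) + X 0 * Rn (L ^ e'' * Nc 0 b) := by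
    simpa [Rn] using h4
  obtain ⟨h6, h7⟩ := dvd_pair h5
  have hL : ∀ m q, f ∣ L ^ m * q → f ∣ q := by
    intro m q h
    rcases S.prime.dvd_or_dvd h with h | h
    · exact absurd (S.prime.dvd_of_dvd_pow h) S.ndvd
    · exact h
  obtain ⟨a', rfl⟩ := hL _ _ (hL _ _ h6)
  obtain ⟨b'', hb''⟩ := hL _ _ h7
  rw [hb'', Rn_mul] at hb'
  have m0 : (X 0 : MvPolynomial (Fin (n+1)) k) ∈ Ideal.span {X 0, Rn f} := Ideal.subset_span (by simp)
  have m1 : Rn f ∈ Ideal.span {X 0, Rn f} := Ideal.subset_span (by simp)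
  rw [hb', Rn_mul, sq]
  refine Ideal.add_mem _ (Ideal.mul_mem_mul m1 (Ideal.mul_mem_right _ _ m1)) 
    (Ideal.mul_mem_mul m0 (Ideal.add_mem _ (Ideal.mul_mem_right _ _ m1) (Ideal.mul_mem_right _ _ m0)))

theorem two' (S : Side f L d x) {h : MvPolynomial (Fin (n+1)) k} (h2 : h ∈ (Ideal.span {X 0, Rn f}) ^ 2) : 
    Rn f ^ 2 ∣ aeval (bl f L) h := by
  have h3 := Ideal.mem_map_of_mem (aeval (bl f L)).toRingHom h2
  rw [Ideal.map_pow] at h3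
  have h4 : Ideal.map (aeval (bl f L)).toRingHom (Ideal.span {X 0, Rn f}) ≤ Ideal.span {Rn f} := by
    rw [Ideal.map_span, Ideal.span_le]
    rintro _ ⟨z, rfl | rfl, rfl⟩
    · change aeval (bl f L) (X 0) ∈ Ideal.span {Rn f}
      rw [aeval_X, bl_zero, Ideal.mem_span_singleton]; exact Dvd.intro_left _ rfl
    · change aeval (bl f L) (Rn f) ∈ Ideal.span {Rn f}
      rw [bl_Rn f L S.homog, Ideal.mem_span_singleton]; exact Dvd.intro_left _ rfl
  have h5 := Ideal.pow_right_mono h4 2 h3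
  rw [Ideal.span_singleton_pow, Ideal.mem_span_singleton] at h5
  exact h5

end Side

end lift

end ConeCrem

namespace ConeCrem

open MvPolynomial

section lift2

variable {k : Type} [Field k]

/-- Birational equivalence of prime hypersurfaces induced by a Cremona map. -/
def Bir {ι : Type} (f f' : MvPolynomial ι k) : Prop :=
  ∃ F G W W', Crm (k := k) F G W W' ∧ ¬ f ∣ W ∧ ¬ f' ∣ W' ∧ f ∣ aeval F f' ∧ f' ∣ aeval G f

variable {n : ℕ} {K : Type} [Field K] [Algebra k K]

/-- half of the data of `E` -/
structure HE (F G : Fin (n+1) → MvPolynomial (Fin (n+1)) k) (W W' : MvPolynomial (Fin (n+1)) k)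
   (x y : Fin n → K) : Prop where
  crm : Crm F G W W'
  h1 : ∃ l : K, l ≠ 0 ∧ ∀ j, aeval (Fin.cons 0 x : Fin (n+1) → K) (F j) = l * (Fin.cons 0 y : Fin (n+1) → K) j
  h2 : ∃ l : K, l ≠ 0 ∧ ∀ j, aeval (Fin.cons 0 y : Fin (n+1) → K) (G j) = l * (Fin.cons 0 x : Fin (n+1) → K) j
  nx : ∃ j, x j ≠ 0
  ny : ∃ j, y j ≠ 0

variable {F G : Fin (n+1) → MvPolynomial (Fin (n+1)) k} {W W' : MvPolynomial (Fin (n+1)) k}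
   {x y : Fin n → K}

theorem HE.symm (h : HE F G W W' x y) : HE G F W' W y x := ⟨h.crm.symm, h.h2, h.h1, h.ny, h.nx⟩

theorem HE.Fzero (H : HE F G W W' x y) {h : MvPolynomial (Fin (n+1)) k} {e : ℕ}
    (hh : h.IsHomogeneous e) : aeval (Fin.cons 0 x : Fin (n+1) → K) (aeval F h) = 0 ↔
      aeval (Fin.cons 0 y : Fin (n+1) → K) h = 0 := by
  obtain ⟨l, hl, h1⟩ := H.h1
  rw [aeval_aeval', aeval_scale_of hh l (Fin.cons 0 y : Fin (n+1) → K) _ h1]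
  simp [hl]

theorem HE.Wne (H : HE F G W W' x y) : aeval (Fin.cons 0 x : Fin (n+1) → K) W ≠ 0 := by
  obtain ⟨j, hj⟩ := H.nx
  obtain ⟨m, hm, h2⟩ := H.h2
  obtain ⟨b, hb⟩ := H.crm.hG
  intro hW
  have := H.crm.fg j.succ
  have h3 := (H.Fzero (hb j.succ)).1 (by rw [this, map_mul, hW, zero_mul])
  rw [h2] at h3
  simp [hm, hj] at h3

theorem Fhom {h : MvPolynomial (Fin (n+1)) k} {e : ℕ} (H : HE F G W W' x y)
    (hh : h.IsHomogeneous e) : ∃ e', (aeval F h).IsHomogeneous e' := by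
  obtain ⟨a, ha⟩ := H.crm.hF
  exact ⟨_, homog_aeval hh ha⟩

variable {f₁ L₁ f₂ L₂ : MvPolynomial (Fin n) k} {d₁ d₂ : ℕ}

theorem exists_sr (S₁ : Side f₁ L₁ d₁ x) (S₂ : Side f₂ L₂ d₂ y) (H : HE F G W W' x y) :
    ∃ s r, aeval (bl f₁ L₁) (aeval F (Rn f₂)) = Rn f₁ * s ∧
      aeval (bl f₁ L₁) (F 0) = Rn f₁ * r ∧ ¬ Rn f₁ ∣ s := by
  have hf2 : (Rn f₂).IsHomogeneous d₂ := S₂.homog.rename_isHomogeneous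
  obtain ⟨e', he'⟩ := Fhom H hf2
  obtain ⟨e₀, he₀⟩ := Fhom H (isHomogeneous_X k (0 : Fin (n+1)))
  have z1 : Rn f₁ ∣ aeval (bl f₁ L₁) (aeval F (Rn f₂)) := by
    rw [S₁.one he', H.Fzero hf2, S₂.gen' hf2, Nc_Rn]
  have z2 : Rn f₁ ∣ aeval (bl f₁ L₁) (aeval F (X 0 : MvPolynomial (Fin (n+1)) k)) := by
    rw [S₁.one he₀, H.Fzero (isHomogeneous_X k (0 : Fin (n+1)))]; simp
  obtain ⟨s, hs⟩ := z1
  obtain ⟨r, hr⟩ := z2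
  rw [aeval_X] at hr
  refine ⟨s, r, hs, hr, ?_⟩
  rintro ⟨s', rfl⟩
  have h2 := S₁.two he' ⟨s', by rw [hs]; ring⟩
  -- apply `G`
  have h3 := Ideal.mem_map_of_mem (aeval G).toRingHom h2
  rw [Ideal.map_pow] at h3
  have h4 : Ideal.map (aeval G).toRingHom (Ideal.span {X 0, Rn f₁}) ≤ Ideal.span {X 0, Rn f₂} := by
    rw [Ideal.map_span, Ideal.span_le]
    have key : ∀ (z : MvPolynomial (Fin (n+1)) k) e, z.IsHomogeneous e →
        aeval (Fin.cons 0 x : Fin (n+1) → K) z = 0 → aeval G z ∈ Ideal.span {X 0, Rn f₂} := by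
      intro z e hz h0
      obtain ⟨e', he'⟩ := Fhom H.symm hz
      exact S₂.mem_one he' ((H.symm.Fzero hz).2 h0)
    rintro _ ⟨z, rfl | rfl, rfl⟩
    · exact key (X 0) _ (isHomogeneous_X k _) (by simp)
    · refine key (Rn f₁) _ S₁.homog.rename_isHomogeneous ?_
      rw [S₁.gen' S₁.homog.rename_isHomogeneous, Nc_Rn]
  have h5 := Ideal.pow_right_mono h4 2 h3
  change aeval G (aeval F (Rn f₂)) ∈ _ at h5
  rw [H.crm.symm.fgh hf2] at h5
  have h6 := S₂.two' h5
  rw [map_mul, map_pow, bl_Rn f₂ L₂ S₂.homog] at h6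
  have h7 : Rn f₂ * Rn f₂ ∣ Rn f₂ * (aeval (bl f₂ L₂) W' ^ d₂ * Rn L₂ ^ d₂) := by
    rw [← sq]; convert h6 using 1; ring
  have h8 := (mul_dvd_mul_iff_left S₂.pr.ne_zero).1 h7
  rcases S₂.pr.dvd_or_dvd h8 with h | h
  · have h9 := S₂.pr.dvd_of_dvd_pow h
    obtain ⟨w, hw⟩ := H.symm.crm.homogW
    rw [S₂.one hw] at h9
    exact H.symm.Wne h9
  · exact S₂.nL (S₂.pr.dvd_of_dvd_pow h)

/-- the lifted map -/
noncomputable def Ps (F : Fin (n+1) → MvPolynomial (Fin (n+1)) k) (f₁ L₁ L₂ : MvPolynomial (Fin n) k)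
    (s r : MvPolynomial (Fin (n+1)) k) : Fin (n+1) → MvPolynomial (Fin (n+1)) k :=
  Fin.cons (r * aeval (bl f₁ L₁) (aeval F (Rn L₂))) (fun j => s * aeval (bl f₁ L₁) (F j.succ))

theorem bl_homog (S₁ : Side f₁ L₁ d₁ x) (j) : (bl f₁ L₁ j).IsHomogeneous (1 + d₁) := by
  refine Fin.cases ?_ (fun j => ?_) j
  · exact (isHomogeneous_X k _).mul S₁.homog.rename_isHomogeneous
  · exact (isHomogeneous_X k _).mul S₁.homogL.rename_isHomogeneous

theorem Ps_homog (S₁ : Side f₁ L₁ d₁ x) (S₂ : Side f₂ L₂ d₂ y) (H : HE F G W W' x y)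
    {s r : MvPolynomial (Fin (n+1)) k}
    (hs : aeval (bl f₁ L₁) (aeval F (Rn f₂)) = Rn f₁ * s)
    (hr : aeval (bl f₁ L₁) (F 0) = Rn f₁ * r) :
    ∃ a, ∀ j, (Ps F f₁ L₁ L₂ s r j).IsHomogeneous a := by
  obtain ⟨a, ha⟩ := H.crm.hF
  have key : ∀ j, (Rn f₁ * Ps F f₁ L₁ L₂ s r j).IsHomogeneous ((1 + d₁) * (a * (1 + d₂))) := by
    have : ∀ j (z : MvPolynomial (Fin (n+1)) k), z.IsHomogeneous d₂ → 
      (aeval (bl f₁ L₁) (aeval F (X j * z))).IsHomogeneous ((1 + d₁) * (a * (1 + d₂))) :=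
      fun j z hz => homog_aeval (homog_aeval ((isHomogeneous_X k _).mul hz) ha) (bl_homog S₁)
    intro j
    refine Fin.cases ?_ (fun j => ?_) j
    · have := this 0 (Rn L₂) S₂.homogL.rename_isHomogeneous
      rw [map_mul, map_mul, aeval_X, hr] at this
      rw [Ps, Fin.cons_zero, ← mul_assoc]
      exact this
    · have := this j.succ (Rn f₂) S₂.homog.rename_isHomogeneous
      rw [map_mul, map_mul, aeval_X, hs] at this
      rw [Ps, Fin.cons_succ, ← mul_assoc, mul_comm]
      exact this
  exact ⟨_, fun j => homog_of_mul S₁.homog.rename_isHomogeneous S₁.pr.ne_zero (key j)⟩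

theorem Ps_Rn (F : Fin (n+1) → MvPolynomial (Fin (n+1)) k) (f₁ L₁ L₂ : MvPolynomial (Fin n) k)
    (s r : MvPolynomial (Fin (n+1)) k) {p : MvPolynomial (Fin n) k} {e : ℕ}
    (hp : p.IsHomogeneous e) : aeval (Ps F f₁ L₁ L₂ s r) (Rn p) = 
      s ^ e * aeval (bl f₁ L₁) (aeval F (Rn p)) := by
  rw [aeval_Rn_scale hp (Ps F f₁ L₁ L₂ s r) (fun j => aeval (bl f₁ L₁) (F j)) s (fun j => rfl),
    aeval_aeval']

theorem dvd_of_two {ι : Type} {i j : ι} (hij : i ≠ j) {p P : MvPolynomial ι k} (hp : p ≠ 0)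
    (h1 : p ∣ P * X i) (h2 : p ∣ P * X j) : p ∣ P := by
  obtain ⟨s, hs⟩ := h1
  obtain ⟨t, ht⟩ := h2
  have h3 : s * X j = t * X i := by
    apply mul_left_cancel₀ hp
    rw [← mul_assoc, ← hs, ← mul_assoc, ← ht]; ring
  have hpr : Prime (X i : MvPolynomial ι k) := X_prime
  have h4 : (X i : MvPolynomial ι k) ∣ s * X j := ⟨t, by rw [h3]; ring⟩
  rcases hpr.dvd_or_dvd h4 with ⟨s', rfl⟩ | h
  · refine ⟨s', mul_right_cancel₀ hpr.ne_zero (b := X i) ?_⟩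
    rw [hs]; ring
  · rw [X_dvd_X] at h
    exact absurd h hij

theorem half (S₁ : Side f₁ L₁ d₁ x) (S₂ : Side f₂ L₂ d₂ y) (H : HE F G W W' x y)
    {s r s' r' : MvPolynomial (Fin (n+1)) k}
    (hs : aeval (bl f₁ L₁) (aeval F (Rn f₂)) = Rn f₁ * s)
    (hr : aeval (bl f₁ L₁) (F 0) = Rn f₁ * r) (hns : ¬ Rn f₁ ∣ s)
    (hs' : aeval (bl f₂ L₂) (aeval G (Rn f₁)) = Rn f₂ * s')
    (hr' : aeval (bl f₂ L₂) (G 0) = Rn f₂ * r') :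
    Rn f₁ ∣ aeval (Ps F f₁ L₁ L₂ s r) (Rn f₂) ∧
    ∃ V, (∀ i, aeval (Ps F f₁ L₁ L₂ s r) (Ps G f₂ L₂ L₁ s' r' i) = V * X i) ∧ ¬ Rn f₁ ∣ V := by
  have hg2 : aeval (Ps F f₁ L₁ L₂ s r) (Rn f₂) = s ^ (d₂ + 1) * Rn f₁ := by
    rw [Ps_Rn _ _ _ _ _ _ S₂.homog, hs]; ring
  refine ⟨hg2 ▸ Dvd.intro_left _ rfl, ?_⟩
  set u := aeval (bl f₁ L₁) (aeval F (Rn L₂)) with hu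
  have hnu : ¬ Rn f₁ ∣ u := by
    have hh : (Rn L₂).IsHomogeneous d₂ := S₂.homogL.rename_isHomogeneous
    obtain ⟨e', he'⟩ := Fhom H hh
    rw [hu, S₁.one he', H.Fzero hh, S₂.gen' hh, Nc_Rn]
    exact S₂.ndvd
  have hnW : ¬ Rn f₁ ∣ aeval (bl f₁ L₁) W := by
    obtain ⟨w, hw⟩ := H.crm.homogW
    rw [S₁.one hw]; exact H.Wne
  set Q := u * s ^ (d₂ + 1) with hQ
  have hbl : ∀ i, aeval (Ps F f₁ L₁ L₂ s r) (bl f₂ L₂ i) = Q * aeval (bl f₁ L₁) (F i) := by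
    intro i
    refine Fin.cases ?_ (fun j => ?_) i
    · rw [bl_zero, map_mul, aeval_X, hg2, hr, Ps, Fin.cons_zero, hQ]; ring
    · rw [bl_succ, map_mul, aeval_X, Ps_Rn _ _ _ _ _ _ S₂.homogL, Ps, Fin.cons_succ, hQ]; ring
  have hblh : ∀ (h : MvPolynomial (Fin (n+1)) k) e, h.IsHomogeneous e → 
      aeval (Ps F f₁ L₁ L₂ s r) (aeval (bl f₂ L₂) h) = Q ^ e * aeval (bl f₁ L₁) (aeval F h) := by
    intro h e hh
    rw [aeval_aeval', aeval_scale_of hh Q _ _ hbl, aeval_aeval' F]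
  obtain ⟨b, hb⟩ := H.crm.hG
  -- the key identity
  have key : ∀ i, s ^ (d₂ + 1) * aeval (Ps F f₁ L₁ L₂ s r) (Ps G f₂ L₂ L₁ s' r' i) =
      (Q ^ (b * (1 + d₁)) * aeval (bl f₁ L₁) W ^ (1 + d₁) * Rn L₁ ^ (d₁ + 1)) * X i := by
    intro i
    apply mul_left_cancel₀ S₁.pr.ne_zero
    -- Rn f₂ * Ps' i = bl₂ (G (inv i))
    obtain ⟨z, hz, hz1, hz2⟩ : ∃ z : MvPolynomial (Fin (n+1)) k, z.IsHomogeneous (1 + d₁) ∧ 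
        Rn f₂ * Ps G f₂ L₂ L₁ s' r' i = aeval (bl f₂ L₂) (aeval G z) ∧
        aeval (bl f₁ L₁) z = Rn f₁ * Rn L₁ ^ (d₁ + 1) * X i := by
      refine Fin.cases ?_ (fun j => ?_) i
      · refine ⟨X 0 * Rn L₁, (isHomogeneous_X k _).mul S₁.homogL.rename_isHomogeneous, ?_, ?_⟩
        · rw [map_mul, map_mul, aeval_X, hr', Ps, Fin.cons_zero]; ring
        · rw [map_mul, aeval_X, bl_zero, bl_Rn _ _ S₁.homogL]; ring
      · refine ⟨X j.succ * Rn f₁, (isHomogeneous_X k _).mul S₁.homog.rename_isHomogeneous, ?_, ?_⟩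
        · rw [map_mul, map_mul, aeval_X, hs', Ps, Fin.cons_succ]; ring
        · rw [map_mul, aeval_X, bl_succ, bl_Rn _ _ S₁.homog]; ring
    have e1 := congrArg (aeval (Ps F f₁ L₁ L₂ s r)) hz1
    rw [map_mul, hg2, hblh _ _ (homog_aeval hz hb), H.crm.fgh hz, map_mul, map_pow, hz2] at e1
    calc _ = s ^ (d₂ + 1) * Rn f₁ * aeval (Ps F f₁ L₁ L₂ s r) (Ps G f₂ L₂ L₁ s' r' i) := by ring
      _ = _ := e1
      _ = _ := by ring
  obtain ⟨j, -⟩ := H.nx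
  have hs0 : s ≠ 0 := fun h => hns (h ▸ dvd_zero _)
  obtain ⟨V, hV⟩ := dvd_of_two (i := (0 : Fin (n+1))) (j := j.succ) (Fin.succ_ne_zero j).symm
    (pow_ne_zero (d₂ + 1) hs0) (Dvd.intro _ (key 0)) (Dvd.intro _ (key j.succ))
  refine ⟨V, fun i => ?_, fun hdvd => ?_⟩
  · apply mul_left_cancel₀ (pow_ne_zero (d₂ + 1) hs0)
    rw [key, hV]; ring
  · have h9 : Rn f₁ ∣ Q ^ (b * (1 + d₁)) * aeval (bl f₁ L₁) W ^ (1 + d₁) * Rn L₁ ^ (d₁ + 1) := by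
      rw [hV]; exact Dvd.dvd.mul_left hdvd _
    rcases S₁.pr.dvd_or_dvd h9 with h | h
    · rcases S₁.pr.dvd_or_dvd h with h | h
      · rcases S₁.pr.dvd_or_dvd (S₁.pr.dvd_of_dvd_pow h) with h | h
        · exact hnu h
        · exact hns (S₁.pr.dvd_of_dvd_pow h)
      · exact hnW (S₁.pr.dvd_of_dvd_pow h)
    · exact S₁.nL (S₁.pr.dvd_of_dvd_pow h)

theorem lift (S₁ : Side f₁ L₁ d₁ x) (S₂ : Side f₂ L₂ d₂ y) (nx : ∃ j, x j ≠ 0) (ny : ∃ j, y j ≠ 0)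
    (h : E k (Fin.cons 0 x : Fin (n+1) → K) (Fin.cons 0 y : Fin (n+1) → K)) :
    Bir (Rn f₁) (Rn f₂) := by
  obtain ⟨F, G, W, W', hc, h1, h2⟩ := h
  have H : HE F G W W' x y := ⟨hc, h1, h2, nx, ny⟩
  obtain ⟨s, r, hs, hr, hns⟩ := exists_sr S₁ S₂ H
  obtain ⟨s', r', hs', hr', hns'⟩ := exists_sr S₂ S₁ H.symm
  obtain ⟨d1, V, hV, hnV⟩ := half S₁ S₂ H hs hr hns hs' hr'
  obtain ⟨d2, V', hV', hnV'⟩ := half S₂ S₁ H.symm hs' hr' hns' hs hr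
  exact ⟨_, _, V, V', ⟨Ps_homog S₁ S₂ H hs hr, Ps_homog S₂ S₁ H.symm hs' hr', hV, hV'⟩,
    hnV, hnV', d1, d2⟩

end lift2

end ConeCrem

namespace ConeCrem

open MvPolynomial ProjSp

section bridge

variable {k : Type} [Field k]

theorem Bir.symm {ι : Type} {f f' : MvPolynomial ι k} (h : Bir f f') : Bir f' f := by
  obtain ⟨F, G, W, W', h, h1, h2, h3, h4⟩ := h
  exact ⟨G, F, W', W, h.symm, h2, h1, h4, h3⟩

theorem Bir.trans {ι : Type} [Nonempty ι] {f₁ f₂ f₃ : MvPolynomial ι k} (p₁ : Prime f₁)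
    (p₂ : Prime f₂) (p₃ : Prime f₃) (h : Bir f₁ f₂) (h' : Bir f₂ f₃) : Bir f₁ f₃ := by
  have aux : ∀ {f₁ f₂ : MvPolynomial ι k}, Prime f₂ → ∀ {F G W W'}, Crm (k := k) F G W W' →
      ¬ f₂ ∣ W' → f₂ ∣ aeval G f₁ → ∀ {w e}, w.IsHomogeneous e → ¬ f₂ ∣ w → ¬ f₁ ∣ aeval F w := by
    intro f₁ f₂ hf F G W W' hc hW hG w e hw hnw hd
    have := hG.trans (map_dvd (aeval G) hd)
    rw [hc.symm.fgh hw] at this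
    rcases hf.dvd_or_dvd this with h | h
    · exact hW (hf.dvd_of_dvd_pow h)
    · exact hnw h
  have aux2 : ∀ {f a b : MvPolynomial ι k} {e : ℕ}, Prime f → ¬ f ∣ a → ¬ f ∣ b → ¬ f ∣ a ^ e * b := by
    intro f a b e hf ha hb h
    rcases hf.dvd_or_dvd h with h | h
    · exact ha (hf.dvd_of_dvd_pow h)
    · exact hb h
  obtain ⟨F, G, W, W', hc, h1, h2, h3, h4⟩ := h
  obtain ⟨F', G', V, V', hc', h1', h2', h3', h4'⟩ := h'
  obtain ⟨e, e', H⟩ := hc.trans hc'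
  obtain ⟨v, hv⟩ := hc'.homogW
  obtain ⟨w, hw⟩ := hc.symm.homogW
  refine ⟨_, _, _, _, H, aux2 p₁ (aux p₂ hc h2 h4 hv h1') h1,
    aux2 p₃ (aux p₂ hc'.symm h1' h3' hw h2) h2', ?_, ?_⟩
  · rw [← aeval_aeval']
    exact h3.trans (map_dvd (aeval F) h3')
  · rw [← aeval_aeval']
    exact h4'.trans (map_dvd (aeval G') h4)

theorem eval_smul_homog {ι : Type} {h : MvPolynomial ι k} {d : ℕ} (hh : h.IsHomogeneous d) (c : k)
    (v : ι → k) : eval (c • v) h = c ^ d * eval v h := by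
  have := aeval_scale hh c v
  exact this

theorem eval_aeval {ι κ : Type} (F : κ → MvPolynomial ι k) (v : ι → k) (h : MvPolynomial κ k) :
    eval v (aeval F h) = eval (fun j => eval v (F j)) h := by
  have := aeval_aeval' F v h
  exact this

theorem null [IsAlgClosed k] {ι : Type} [Finite ι] {P h : MvPolynomial ι k} (hP : Prime P) 
    (H : ∀ v, eval v P = 0 → eval v h = 0) : P ∣ h := by
  have hpr : (Ideal.span {P}).IsPrime := (Ideal.span_singleton_prime hP.ne_zero).2 hP
  rw [← Ideal.mem_span_singleton, ← IsPrime.vanishingIdeal_zeroLocus (K := k) (Ideal.span {P}),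
    mem_vanishingIdeal_iff]
  intro v hv
  exact H v (hv P (Ideal.mem_span_singleton_self P))

theorem null' [IsAlgClosed k] {ι : Type} [Finite ι] {P h : MvPolynomial ι k} (hP : Prime P) {i : ι}
    (hi : ¬ P ∣ X i) (H : ∀ v, v ≠ 0 → eval v P = 0 → eval v h = 0) : P ∣ h := by
  have : P ∣ h * X i := by
    apply null hP
    intro v hv
    by_cases h0 : v = 0
    · simp [h0]
    · rw [map_mul, H v h0 hv, zero_mul]
  exact (hP.dvd_or_dvd this).resolve_right hi

theorem exists_ndvd {ι : Type} {P : MvPolynomial ι k} {v : ι → k} (hv : v ≠ 0) (h : eval v P = 0) :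
    ∃ i, ¬ P ∣ X i := by
  obtain ⟨i, hi⟩ := Function.ne_iff.1 hv
  refine ⟨i, fun ⟨c, hc⟩ => hi ?_⟩
  have := congrArg (eval v) hc
  simpa [h] using this

variable {n : ℕ}

theorem zeros_mk {h : MvPolynomial (Fin (n+1)) k} {d : ℕ} (hh : h.IsHomogeneous d)
    (v : Fin (n+1) → k) (hv : v ≠ 0) : Projectivization.mk k v hv ∈ zeros k h ↔ eval v h = 0 := by
  obtain ⟨a, ha⟩ := Projectivization.exists_smul_eq_mk_rep k v hv
  rw [zeros, Set.mem_ofPred_eq, ← ha, Units.smul_def, eval_smul_homog hh]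
  simp

theorem rat_rep {m : ℕ} (F : RatMap k n m) (v : Fin (n+1) → k) (hv : v ≠ 0) :
    ∃ a : kˣ, (fun i => eval (Projectivization.mk k v hv).rep (F.comp i)) =
      a • (fun i => eval v (F.comp i)) := by
  obtain ⟨a, ha⟩ := Projectivization.exists_smul_eq_mk_rep k v hv
  refine ⟨a ^ F.deg, ?_⟩
  funext i
  rw [← ha, Units.smul_def, eval_smul_homog (F.homog i)]
  simp [Units.smul_def]

theorem defined_mk {m : ℕ} (F : RatMap k n m) (v : Fin (n+1) → k) (hv : v ≠ 0) :
    F.Defined (Projectivization.mk k v hv) ↔ (fun i => eval v (F.comp i)) ≠ 0 := by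
  obtain ⟨a, ha⟩ := rat_rep F v hv
  rw [RatMap.Defined, ha, ne_eq, smul_eq_zero_iff_eq]

theorem app_mk {m : ℕ} (F : RatMap k n m) (v : Fin (n+1) → k) (hv : v ≠ 0)
    (h : (fun i => eval v (F.comp i)) ≠ 0) :
    F.app (Projectivization.mk k v hv) = Projectivization.mk k _ h := by
  have hd := (defined_mk F v hv).2 h
  rw [RatMap.Defined] at hd
  rw [RatMap.app, dif_pos hd, Projectivization.mk_eq_mk_iff]
  obtain ⟨a, ha⟩ := rat_rep F v hv
  exact ⟨a, ha.symm⟩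

theorem Crm.point {F G : Fin (n+1) → MvPolynomial (Fin (n+1)) k} {W W' : MvPolynomial (Fin (n+1)) k}
    (h : Crm F G W W') {v : Fin (n+1) → k} (hv : v ≠ 0) (hW : eval v W ≠ 0) :
    (fun i => eval v (F i)) ≠ 0 ∧ 
      (fun i => eval (fun j => eval v (F j)) (G i)) = eval v W • v := by
  have key : ∀ v : Fin (n+1) → k, (fun i => eval (fun j => eval v (F j)) (G i)) = eval v W • v := by
    intro v
    funext i
    rw [← eval_aeval, h.fg]; simp
  refine ⟨fun h0 => ?_, key v⟩
  obtain ⟨a, ha⟩ := h.hF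
  have h1 : (fun j => eval (0 : Fin (n+1) → k) (F j)) = fun j => eval v (F j) := by
    rw [h0]
    funext j
    have := eval_smul_homog (ha j) 0 v
    rw [zero_smul, show eval v (F j) = 0 from congrFun h0 j, mul_zero] at this
    exact this
  have h2 := key 0
  rw [h1, key v] at h2
  simp [hW, hv] at h2

theorem bridge_half {F G : Fin (n+1) → MvPolynomial (Fin (n+1)) k} {W W' : MvPolynomial (Fin (n+1)) k}
    (h : Crm F G W W') {a b w d d' : ℕ} (ha : ∀ j, (F j).IsHomogeneous a) 
    (hb : ∀ j, (G j).IsHomogeneous b) (hw : W.IsHomogeneous w)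
    {f f' : MvPolynomial (Fin (n+1)) k} (hf : f.IsHomogeneous d) (hf' : f'.IsHomogeneous d')
    (hdvd : f ∣ aeval F f') (x : ProjSp k n) (hx : x ∈ zeros k f \ zeros k W) :
    (⟨a, F, ha⟩ : RatMap k n n).Defined x ∧ (⟨a, F, ha⟩ : RatMap k n n).app x ∈ zeros k f' ∧
    (⟨b, G, hb⟩ : RatMap k n n).Defined ((⟨a, F, ha⟩ : RatMap k n n).app x) ∧
    (⟨b, G, hb⟩ : RatMap k n n).app ((⟨a, F, ha⟩ : RatMap k n n).app x) = x := by
  induction x using Projectivization.ind with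
  | h v hv =>
    rw [Set.mem_sdiff, zeros_mk hf, zeros_mk hw] at hx
    obtain ⟨hx1, hx2⟩ := hx
    obtain ⟨h1, h2⟩ := h.point hv hx2
    have h3 : (fun i => eval (fun j => eval v (F j)) (G i)) ≠ 0 := by
      rw [h2]; exact smul_ne_zero hx2 hv
    rw [app_mk _ v hv h1, defined_mk, defined_mk, zeros_mk hf']
    refine ⟨h1, ?_, h3, ?_⟩
    · change eval (fun j => eval v (F j)) f' = 0
      rw [← eval_aeval]
      obtain ⟨c, hc⟩ := hdvd
      rw [hc, map_mul, hx1, zero_mul]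
    · rw [app_mk _ _ h1 h3, Projectivization.mk_eq_mk_iff']
      exact ⟨_, h2.symm⟩

theorem bridge [IsAlgClosed k] {f f' : MvPolynomial (Fin (n+1)) k} {d d' : ℕ} (hf : f.IsHomogeneous d) 
    (hf' : f'.IsHomogeneous d') (pf : Prime f) (pf' : Prime f') {i i' : Fin (n+1)} (hi : ¬ f ∣ X i)
    (hi' : ¬ f' ∣ X i') (h : Bir f f') : CremonaEquivalent k (zeros k f) (zeros k f') := by
  obtain ⟨F, G, W, W', h, h1, h2, h3, h4⟩ := h
  obtain ⟨a, ha⟩ := h.hF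
  obtain ⟨b, hb⟩ := h.hG
  obtain ⟨w, hw⟩ := h.homogW
  obtain ⟨w', hw'⟩ := h.symm.homogW
  have z0 : zeros k (0 : MvPolynomial (Fin (n+1)) k) = Set.univ := by
    ext; simp [zeros]
  have hnu : ∀ {W f : MvPolynomial (Fin (n+1)) k} {w : ℕ}, W.IsHomogeneous w → ¬ f ∣ W → 
      ¬ zeros k (0 : MvPolynomial (Fin (n+1)) k) ⊆ zeros k W := by
    intro W f w hw hfW hsub
    have hW0 : W * X 0 = 0 := by
      apply MvPolynomial.funext
      intro v
      rw [map_mul, eval_X, map_zero]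
      by_cases hv : v = 0
      · simp [hv]
      · have := hsub ((zeros_mk (isHomogeneous_zero _ _ 0) v hv).2 (map_zero _))
        rw [zeros_mk hw] at this
        rw [this, zero_mul]
    have := (mul_eq_zero.1 hW0).resolve_right (X_ne_zero _)
    exact hfW (this ▸ dvd_zero _)
  have hnf : ∀ {W f : MvPolynomial (Fin (n+1)) k} {w d : ℕ} {i}, W.IsHomogeneous w → f.IsHomogeneous d →
      Prime f → ¬ f ∣ X i → ¬ f ∣ W → ¬ zeros k f ⊆ zeros k W := by
    intro W f w d i hw hf pf hi hfW hsub
    refine hfW (null' pf hi fun v hv hv' => ?_)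
    have := hsub ((zeros_mk hf v hv).2 hv')
    rwa [zeros_mk hw] at this
  refine ⟨⟨a, F, ha⟩, ⟨b, G, hb⟩, ?_, ?_⟩
  · rw [← z0]
    exact ⟨W, W', w, w', hw, hw', hnu hw h1, hnu hw' h2,
      bridge_half h ha hb hw (isHomogeneous_zero _ _ 0) (isHomogeneous_zero _ _ 0) (by simp),
      bridge_half h.symm hb ha hw' (isHomogeneous_zero _ _ 0) (isHomogeneous_zero _ _ 0) (by simp)⟩
  · exact ⟨W, W', w, w', hw, hw', hnf hw hf pf hi h1, hnf hw' hf' pf' hi' h2,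
      bridge_half h ha hb hw hf hf' h3, bridge_half h.symm hb ha hw' hf' hf h4⟩

end bridge

end ConeCrem

namespace ConeCrem

open MvPolynomial ProjSp

section linear

variable {k : Type} [Field k]

/-- linear forms of a linear map -/
noncomputable def LF {ι κ : Type} [Fintype ι] [DecidableEq ι] (A : (ι → k) →ₗ[k] (κ → k)) (i : κ) :
    MvPolynomial ι k := ∑ j, C (A (Pi.single j 1) i) * X j

theorem eval_LF {ι κ : Type} [Fintype ι] [DecidableEq ι] (A : (ι → k) →ₗ[k] (κ → k)) (i : κ)
    (v : ι → k) : eval v (LF A i) = A v i := by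
  conv_rhs => rw [LinearMap.pi_apply_eq_sum_univ A v]
  simp only [LF, map_sum, map_mul, eval_C, eval_X, Finset.sum_apply, Pi.smul_apply, smul_eq_mul]
  refine Finset.sum_congr rfl fun j _ => ?_
  rw [mul_comm]
  have : (Pi.single j 1 : ι → k) = fun j' => if j = j' then 1 else 0 := by
    funext i
    simp [Pi.single_apply, eq_comm]
  rw [this]

theorem LF_homog {ι κ : Type} [Fintype ι] [DecidableEq ι] (A : (ι → k) →ₗ[k] (κ → k)) (i : κ) :
    (LF A i).IsHomogeneous 1 := by
  apply IsHomogeneous.sum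
  intro j _
  simpa using (isHomogeneous_C ι (A (Pi.single j 1) i)).mul (isHomogeneous_X k j)

theorem eval_LF_aeval {ι κ : Type} [Fintype ι] [DecidableEq ι] (A : (ι → k) →ₗ[k] (κ → k)) 
    (v : ι → k) (h : MvPolynomial κ k) : eval v (aeval (LF A) h) = eval (A v) h := by
  rw [eval_aeval]
  congr 2
  funext i
  exact eval_LF A i v

theorem LF_inv [Infinite k] {ι : Type} [Fintype ι] [DecidableEq ι] (T : (ι → k) ≃ₗ[k] (ι → k))
    (h : MvPolynomial ι k) :
    aeval (LF T.toLinearMap) (aeval (LF T.symm.toLinearMap) h) = h := by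
  apply MvPolynomial.funext
  intro v
  rw [eval_LF_aeval, eval_LF_aeval]
  simp

theorem LF_prime [Infinite k] {ι : Type} [Fintype ι] [DecidableEq ι] (T : (ι → k) ≃ₗ[k] (ι → k))
    {f : MvPolynomial ι k} (hf : Prime f) : Prime (aeval (LF T.toLinearMap) f) := by
  let e : MvPolynomial ι k ≃* MvPolynomial ι k :=
    { toFun := aeval (LF T.toLinearMap)
      invFun := aeval (LF T.symm.toLinearMap)
      left_inv := fun h => LF_inv T.symm h
      right_inv := fun h => LF_inv T h
      map_mul' := map_mul _ }
  exact (MulEquiv.prime_iff e).2 hf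

theorem LF_bir [Infinite k] {ι : Type} [Fintype ι] [DecidableEq ι] (T : (ι → k) ≃ₗ[k] (ι → k))
    {f g : MvPolynomial ι k} (hf : Prime f) (hg : Prime g) (h1 : aeval (LF T.toLinearMap) f ∣ g)
    (h2 : g ∣ aeval (LF T.toLinearMap) f) : Bir f g := by
  refine ⟨LF T.symm.toLinearMap, LF T.toLinearMap, 1, 1, ⟨⟨1, LF_homog _⟩, ⟨1, LF_homog _⟩, ?_, ?_⟩,
    fun h => hf.not_isUnit (isUnit_of_dvd_one h), fun h => hg.not_isUnit (isUnit_of_dvd_one h), ?_, h2⟩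
  · intro i
    have := LF_inv T.symm (X i)
    rw [aeval_X] at this
    rw [one_mul, ← this]
    rfl
  · intro i
    have := LF_inv T (X i)
    rw [aeval_X] at this
    rw [one_mul, ← this]
  · have := map_dvd (aeval (LF T.symm.toLinearMap)) h1
    rwa [show aeval (LF T.symm.toLinearMap) (aeval (LF T.toLinearMap) f) = f from LF_inv T.symm f] at this

theorem exists_functional {ι : Type} [Finite ι] {h : MvPolynomial ι k} (hh : h.IsHomogeneous 1) :
    ∃ l : (ι → k) →ₗ[k] k, ∀ v, l v = eval v h := by
  have := (mem_homogeneousSubmodule 1 h).2 hh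
  rw [homogeneousSubmodule_one_eq_span_X] at this
  clear hh
  induction this using Submodule.span_induction with
  | mem x hx =>
    obtain ⟨i, rfl⟩ := hx
    exact ⟨LinearMap.proj i, fun v => by simp⟩
  | zero => exact ⟨0, by simp⟩
  | add x y hx hy h1 h2 =>
    obtain ⟨l1, h1⟩ := h1
    obtain ⟨l2, h2⟩ := h2
    exact ⟨l1 + l2, fun v => by simp [h1, h2]⟩
  | smul a x hx h =>
    obtain ⟨l, h⟩ := h
    exact ⟨a • l, fun v => by simp [h, smul_eval]⟩

theorem exists_T {n : ℕ} (l : (Fin (n+1) → k) →ₗ[k] k) (p : Fin (n+1) → k) (hp : l p ≠ 0) :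
    ∃ T : (Fin (n+1) → k) ≃ₗ[k] (Fin (n+1) → k), T (Pi.single 0 1) = p ∧ ∀ v, l (T v) = v 0 * l p := by
  have hr : LinearMap.range l = ⊤ := LinearMap.range_eq_top.2 (LinearMap.surjective (fun h => hp (by rw [h]; rfl)))
  have hfr : Module.finrank k (LinearMap.ker l) = n := by
    have := LinearMap.finrank_range_add_finrank_ker l
    rw [hr] at this
    simp at this
    omega
  let b := Module.finBasisOfFinrankEq k (LinearMap.ker l) hfr
  let A : (Fin (n+1) → k) →ₗ[k] (Fin (n+1) → k) :=
    (LinearMap.proj 0).smulRight p + ∑ i : Fin n, (LinearMap.proj i.succ).smulRight (b i : Fin (n+1) → k)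
  have hA : ∀ v, A v = v 0 • p + ((∑ i : Fin n, v i.succ • b i : LinearMap.ker l) : Fin (n+1) → k) := by
    intro v
    simp [A]
  have hl : ∀ v, l (A v) = v 0 * l p := by
    intro v
    rw [hA, map_add, LinearMap.mem_ker.1 (Subtype.property _)]
    simp
  have hinj : Function.Injective A := by
    rw [← LinearMap.ker_eq_bot, LinearMap.ker_eq_bot']
    intro v hv
    have h0 : v 0 = 0 := by
      have := hl v
      rw [hv, map_zero] at this
      exact (mul_eq_zero.1 this.symm).resolve_right hp
    rw [hA, h0, zero_smul, zero_add, ZeroMemClass.coe_eq_zero] at hv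
    have := Fintype.linearIndependent_iff.1 b.linearIndependent _ hv
    funext j
    exact Fin.cases h0 this j
  refine ⟨LinearEquiv.ofInjectiveEndo A hinj, ?_, ?_⟩
  · simp [hA]
  · intro v; simpa using hl v

end linear

section cone

variable {k : Type} [Field k] {n : ℕ}

theorem Rn_prime' {p : MvPolynomial (Fin n) k} (hp : Prime (Rn p)) : Prime p := by
  refine ⟨fun h => hp.ne_zero (by rw [h]; exact map_zero _), fun h => hp.not_isUnit (h.map (rename Fin.succ)), ?_⟩
  intro a b h
  rw [← Rn_dvd, Rn_mul] at h
  exact (hp.dvd_or_dvd h).imp Rn_dvd.1 Rn_dvd.1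

theorem eval_Nc (v : Fin n → k) (h : MvPolynomial (Fin (n+1)) k) :
    eval v (Nc 0 h) = eval (Fin.cons 0 v : Fin (n+1) → k) h := by
  rw [Nc, eval_aeval]
  congr 2
  funext j
  refine Fin.cases ?_ (fun j => ?_) j <;> simp

theorem cone_red [IsAlgClosed k] {f h : MvPolynomial (Fin (n+1)) k} {d : ℕ} (hd : 0 < d) (hf : f.IsHomogeneous d)
    (pf : Prime f) (hh : h.IsHomogeneous 1) {p : ProjSp k n} (hc : IsConeWithVertex k (zeros k f) p)
    (hp : p ∉ zeros k h) :
    ∃ (T : (Fin (n+1) → k) ≃ₗ[k] (Fin (n+1) → k)) (f0 : MvPolynomial (Fin n) k),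
      Prime f0 ∧ f0.IsHomogeneous d ∧ Bir f (Rn f0) ∧
      ∀ x : Fin n → k, eval x f0 = eval (T (Fin.cons 0 x)) f ∧ eval (T (Fin.cons 0 x)) h = 0 ∧
       (∀ w, eval w h = 0 → (T.symm w) 0 = 0) := by
  obtain ⟨l, hl⟩ := exists_functional hh
  have hlp : l p.rep ≠ 0 := by rw [hl]; exact hp
  obtain ⟨T, hT0, hT⟩ := exists_T l p.rep hlp
  have f_zero : eval (0 : Fin (n+1) → k) f = 0 := by
    have := eval_smul_homog hf 0 (0 : Fin (n+1) → k)
    rwa [zero_smul, zero_pow hd.ne', zero_mul] at this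
  have fp : eval p.rep f = 0 := hc.1
  have cone : ∀ (v : Fin (n+1) → k) (c : k), eval v f = 0 → eval (v + c • p.rep) f = 0 := by
    intro v c hv
    by_cases hv0 : v = 0
    · rw [hv0, zero_add, eval_smul_homog hf, fp, mul_zero]
    by_cases hw : v + c • p.rep = 0
    · rw [hw, f_zero]
    rw [← zeros_mk hf _ hw]
    apply hc.2 (Projectivization.mk k v hv0) ((zeros_mk hf v hv0).2 hv)
    rw [lineThrough, Set.mem_ofPred_eq, Projectivization.submodule_mk, Projectivization.submodule_mk,
      Submodule.span_singleton_le_iff_mem, add_comm v]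
    apply Submodule.add_mem_sup
    · apply Submodule.smul_mem
      rw [Projectivization.submodule_eq]
      exact Submodule.mem_span_singleton_self _
    · exact Submodule.mem_span_singleton_self _
  set f' := aeval (LF T.toLinearMap) f with hf'def
  have ef' : ∀ v, eval v f' = eval (T v) f := fun v => eval_LF_aeval _ v f
  have pf' : Prime f' := LF_prime T pf
  have hf' : f'.IsHomogeneous d := by
    have := homog_aeval hf (LF_homog T.toLinearMap)
    rwa [one_mul] at this
  have hhf0 : (Nc 0 f').IsHomogeneous d := Nc_homog hf'
  have eRn : ∀ v : Fin (n+1) → k, eval v (Rn (Nc 0 f')) = eval (T (Fin.cons 0 (fun j => v j.succ))) f := by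
    intro v
    rw [Rn, eval_rename, eval_Nc, ef']
    rfl
  have dec : ∀ v : Fin (n+1) → k, T (Fin.cons 0 (fun j => v j.succ)) = T v + (- v 0) • p.rep := by
    intro v
    rw [← hT0, ← map_smul, ← map_add]
    congr 1
    funext j
    refine Fin.cases ?_ (fun j => ?_) j <;> simp
  have d1 : f' ∣ Rn (Nc 0 f') := by
    apply null pf'
    intro v hv
    rw [eRn, dec]
    exact cone _ _ (by rwa [← ef'])
  have hne : Rn (Nc 0 f') ≠ 0 := by
    intro h0
    apply pf'.ne_zero
    apply MvPolynomial.funext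
    intro v
    have := eRn v
    rw [h0, map_zero] at this
    rw [ef', map_zero, show T v = T (Fin.cons 0 (fun j => v j.succ)) + (v 0) • p.rep by rw [dec]; simp]
    exact cone _ _ this.symm
  have d2 : Rn (Nc 0 f') ∣ f' := by
    obtain ⟨c, hc⟩ := d1
    have hR : (Rn (Nc 0 f')).IsHomogeneous d := hhf0.rename_isHomogeneous
    have hcc := homog_of_mul hf' pf'.ne_zero (hc ▸ hR)
    rw [Nat.sub_self] at hcc
    have hcC : c = C (coeff 0 c) := totalDegree_eq_zero_iff_eq_C.1 (by
      have := hcc.totalDegree_le; omega)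
    have hu : IsUnit c := by
      rw [hcC]
      apply IsUnit.map
      rw [isUnit_iff_ne_zero]
      intro h0
      rw [h0, map_zero] at hcC
      exact hne (by rw [hc, hcC, mul_zero])
    rw [hc]
    exact (hu.mul_right_dvd).2 dvd_rfl
  have pR : Prime (Rn (Nc 0 f')) := (associated_of_dvd_dvd d1 d2).prime pf'
  refine ⟨T, Nc 0 f', Rn_prime' pR, hhf0, LF_bir T pf pR d1 d2, fun x => ⟨?_, ?_, ?_⟩⟩
  · rw [eval_Nc, ef']
  · rw [← hl, hT]; simp
  · intro w hw
    rw [← hl, ← T.apply_symm_apply w, hT] at hw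
    exact (mul_eq_zero.1 hw).resolve_right hlp

end cone

end ConeCrem

namespace ConeCrem

open MvPolynomial ProjSp

section sec

variable {k : Type} [Field k] {n : ℕ}

/-- half of a birational correspondence of two affine cones -/
def Half (f₁ f₂ : MvPolynomial (Fin n) k) (φ ψ : Fin n → MvPolynomial (Fin n) k)
    (u : MvPolynomial (Fin n) k) : Prop :=
  ∀ x : Fin n → k, x ≠ 0 → eval x f₁ = 0 → eval x u ≠ 0 →
    (fun j => eval x (φ j)) ≠ 0 ∧ eval (fun j => eval x (φ j)) f₂ = 0 ∧
    ∃ c : k, c ≠ 0 ∧ (fun i => eval (fun j => eval x (φ j)) (ψ i)) = c • x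

variable [IsAlgClosed k] {f₁ f₂ u v : MvPolynomial (Fin n) k} {φ ψ : Fin n → MvPolynomial (Fin n) k}

theorem null_u (p₁ : Prime f₁) {i : Fin n} (hi : ¬ f₁ ∣ X i) (hu : ¬ f₁ ∣ u) {h : MvPolynomial (Fin n) k}
    (H : ∀ x : Fin n → k, x ≠ 0 → eval x f₁ = 0 → eval x u ≠ 0 → eval x h = 0) : f₁ ∣ h := by
  have : f₁ ∣ h * u := by
    apply null' p₁ hi
    intro v hv h1
    by_cases h2 : eval v u = 0
    · rw [map_mul, h2, mul_zero]
    · rw [map_mul, H v hv h1 h2, zero_mul]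
  exact (p₁.dvd_or_dvd this).resolve_right hu

theorem Half.dvd (H : Half f₁ f₂ φ ψ u) (p₁ : Prime f₁) {i : Fin n} (hi : ¬ f₁ ∣ X i) (hu : ¬ f₁ ∣ u) :
    f₁ ∣ aeval φ f₂ := by
  apply null_u p₁ hi hu
  intro x hx h1 h2
  rw [eval_aeval]
  exact (H x hx h1 h2).2.1

theorem Half.minor (H : Half f₁ f₂ φ ψ u) (p₁ : Prime f₁) {i : Fin n} (hi : ¬ f₁ ∣ X i) (hu : ¬ f₁ ∣ u)
    (a b : Fin n) : f₁ ∣ aeval φ (ψ a) * X b - aeval φ (ψ b) * X a := by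
  apply null_u p₁ hi hu
  intro x hx h1 h2
  obtain ⟨-, -, c, hc, h⟩ := H x hx h1 h2
  have ha := congrFun h a
  have hb := congrFun h b
  simp only [Pi.smul_apply, smul_eq_mul] at ha hb
  rw [map_sub, map_mul, map_mul, eval_aeval, eval_aeval, ha, hb, eval_X, eval_X]
  ring

theorem Half.ndvd (H : Half f₁ f₂ φ ψ u) (p₁ : Prime f₁) {i : Fin n} (hi : ¬ f₁ ∣ X i) (hu : ¬ f₁ ∣ u) :
    ¬ f₁ ∣ aeval φ (ψ i) := by
  rintro ⟨g, hg⟩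
  apply hi
  apply null_u p₁ hi hu
  intro x hx h1 h2
  obtain ⟨-, -, c, hc, h⟩ := H x hx h1 h2
  have ha := congrFun h i
  simp only [Pi.smul_apply, smul_eq_mul] at ha
  rw [← eval_aeval, hg, map_mul, h1, zero_mul] at ha
  rw [eval_X]
  exact (mul_eq_zero.1 ha.symm).resolve_left hc

theorem Half.gen (H : Half f₁ f₂ φ ψ u) (H' : Half f₂ f₁ ψ φ v) (p₁ : Prime f₁) (p₂ : Prime f₂) 
    {i i' : Fin n} (hi : ¬ f₁ ∣ X i) (hi' : ¬ f₂ ∣ X i') (hu : ¬ f₁ ∣ u) (hv : ¬ f₂ ∣ v)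
    {h : MvPolynomial (Fin n) k} {e : ℕ} (hh : h.IsHomogeneous e) : f₁ ∣ aeval φ h ↔ f₂ ∣ h := by
  constructor
  · rintro ⟨g, hg⟩
    apply null_u p₂ hi' hv
    intro y hy h1 h2
    obtain ⟨-, h3, c, hc, h4⟩ := H' y hy h1 h2
    have := congrArg (eval (fun j => eval y (ψ j))) hg
    rw [eval_aeval, h4, eval_smul_homog hh, map_mul, h3, zero_mul] at this
    exact (mul_eq_zero.1 this).resolve_left (pow_ne_zero _ hc)
  · exact fun h => (H.dvd p₁ hi hu).trans (map_dvd (aeval φ) h)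

theorem aeval_mem_adjoin {k : Type} [Field k] {K : Type} [Field K] [Algebra k K] (y : Fin n → K) (h : MvPolynomial (Fin n) k) :
    aeval y h ∈ IntermediateField.adjoin k (Set.range y) := by
  apply IntermediateField.algebra_adjoin_le_adjoin
  rw [Algebra.adjoin_range_eq_range_aeval]
  exact ⟨h, rfl⟩

/-- the generic point of a prime cone -/
theorem exists_generic {d : ℕ} (p₁ : Prime f₁) (hf : f₁.IsHomogeneous d) {i : Fin n} (hi : ¬ f₁ ∣ X i) :
    ∃ (K : Type) (_ : Field K) (_ : Algebra k K) (x : Fin n → K), x i = 1 ∧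
      IntermediateField.adjoin k (Set.range x) = ⊤ ∧
      ∀ h e, h.IsHomogeneous e → (aeval x h = 0 ↔ f₁ ∣ h) := by
  have hpr : (Ideal.span {f₁}).IsPrime := (Ideal.span_singleton_prime p₁.ne_zero).2 p₁
  let Q := MvPolynomial (Fin n) k ⧸ Ideal.span {f₁}
  let L := FractionRing Q
  let xb : Fin n → L := fun j => algebraMap Q L (Ideal.Quotient.mk _ (X j))
  have hxb : ∀ h : MvPolynomial (Fin n) k, aeval xb h = 0 ↔ f₁ ∣ h := by
    intro h
    have : aeval xb h = algebraMap Q L (Ideal.Quotient.mk _ h) := by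
      have e : aeval xb = ((IsScalarTower.toAlgHom k Q L).comp (Ideal.Quotient.mkₐ k (Ideal.span {f₁}))) := by
        ext j
        rw [aeval_X]
        rfl
      rw [e]
      rfl
    rw [this, FaithfulSMul.algebraMap_eq_zero_iff, Ideal.Quotient.eq_zero_iff_mem, Ideal.mem_span_singleton]
  have hxi : xb i ≠ 0 := by
    have := (hxb (X i)).not.2 hi
    rwa [aeval_X] at this
  let x' : Fin n → L := fun j => (xb i)⁻¹ * xb j
  let K := IntermediateField.adjoin k (Set.range x')
  let x : Fin n → K := fun j => ⟨x' j, IntermediateField.subset_adjoin _ _ ⟨j, rfl⟩⟩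
  refine ⟨K, inferInstance, inferInstance, x, ?_, ?_, ?_⟩
  · apply Subtype.ext
    exact inv_mul_cancel₀ hxi
  · apply IntermediateField.map_injective K.val
    rw [IntermediateField.adjoin_map, ← Set.range_comp]
    have : K.val ∘ x = x' := rfl
    rw [this]
    change K = _
    rw [← AlgHom.fieldRange_eq_map, IntermediateField.fieldRange_val]
  · intro h e hh
    have h1 : algebraMap K L (aeval x h) = aeval x' h := by
      rw [← aeval_algebraMap_apply]
      rfl
    rw [← hxb, ← map_eq_zero (algebraMap K L), h1, aeval_scale hh]
    simp [hxi]

theorem sec_bir [CharZero k] (H : Half f₁ f₂ φ ψ u) (H' : Half f₂ f₁ ψ φ v) (p₁ : Prime f₁) (p₂ : Prime f₂) 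
    {i i' : Fin n} (hi : ¬ f₁ ∣ X i) (hi' : ¬ f₂ ∣ X i') (hu : ¬ f₁ ∣ u) (hv : ¬ f₂ ∣ v) {d d' b : ℕ}
    (hf : f₁.IsHomogeneous d) (hf' : f₂.IsHomogeneous d') 
    {a : ℕ} (ha : ∀ j, (φ j).IsHomogeneous a) (hb : ∀ j, (ψ j).IsHomogeneous b) : Bir (Rn f₁) (Rn f₂) := by
  obtain ⟨K, _, _, x, hx1, hx, hgen⟩ := exists_generic p₁ hf hi
  have hall : ∀ h, f₁ ∣ h → aeval x h = 0 := by
    rintro h ⟨c, rfl⟩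
    rw [map_mul, (hgen f₁ d hf).2 dvd_rfl, zero_mul]
  let z : Fin n → K := fun j => aeval x (φ j)
  have hz : ∀ h, aeval z h = aeval x (aeval φ h) := fun h => (aeval_aeval' φ x h).symm
  have hzg : ∀ h e, h.IsHomogeneous e → (aeval z h = 0 ↔ f₂ ∣ h) := by
    intro h e hh
    rw [hz, hgen _ _ (homog_aeval hh ha), H.gen H' p₁ p₂ hi hi' hu hv hh]
  have hzi : z i' ≠ 0 := by
    have := (hzg (X i') 1 (isHomogeneous_X k i')).not.2 hi'
    rwa [aeval_X] at this
  let y : Fin n → K := fun j => (z i')⁻¹ * z j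
  have hyz : ∀ {h : MvPolynomial (Fin n) k} {e : ℕ}, h.IsHomogeneous e →
      aeval y h = (z i')⁻¹ ^ e * aeval z h := by
    intro h e hh
    exact aeval_scale hh _ z
  have hy1 : y i' = 1 := inv_mul_cancel₀ hzi
  have hpi : aeval z (ψ i) ≠ 0 := by
    rw [hz, ne_eq, hgen _ _ (homog_aeval (hb i) ha)]
    exact H.ndvd p₁ hi hu
  have hy : IntermediateField.adjoin k (Set.range y) = ⊤ := by
    rw [eq_top_iff, ← hx, IntermediateField.adjoin_le_iff]
    rintro _ ⟨j, rfl⟩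
    have hm := hall _ (H.minor p₁ hi hu j i)
    rw [map_sub, map_mul, map_mul, aeval_X, aeval_X, hx1, ← hz, ← hz, mul_one, sub_eq_zero] at hm
    have : x j = aeval y (ψ j) / aeval y (ψ i) := by
      rw [hyz (hb j), hyz (hb i), hm]
      field_simp
    rw [this]
    exact div_mem (aeval_mem_adjoin y _) (aeval_mem_adjoin y _)
  have S₁ : Side f₁ (X i ^ d) d x :=
    ⟨p₁, hf, by simpa using (isHomogeneous_X k i).pow d, fun h => hi (p₁.dvd_of_dvd_pow h), hgen⟩
  have S₂ : Side f₂ (X i' ^ d') d' y :=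
    ⟨p₂, hf', by simpa using (isHomogeneous_X k i').pow d', fun h => hi' (p₂.dvd_of_dvd_pow h), by
      intro h e hh
      rw [hyz hh, ← hzg h e hh]
      simp [hzi]⟩
  exact lift S₁ S₂ ⟨i, by rw [hx1]; exact one_ne_zero⟩ ⟨i', by rw [hy1]; exact one_ne_zero⟩
    (chain x y i i' hx1 hy1 hx hy hf p₁.ne_zero (hall _ dvd_rfl))

end sec

end ConeCrem

namespace ConeCrem

open MvPolynomial ProjSp

section final

variable {k : Type} [Field k] {n : ℕ}

/-- inclusion of the hyperplane `X 0 = 0` -/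
def cons0 : (Fin n → k) →ₗ[k] (Fin (n+1) → k) where
  toFun x := Fin.cons 0 x
  map_add' x y := by
    funext j
    refine Fin.cases ?_ (fun j => ?_) j <;> simp
  map_smul' c y := by
    funext j
    refine Fin.cases ?_ (fun j => ?_) j <;> simp

/-- forgetting the coordinate `X 0` -/
def tail0 : (Fin (n+1) → k) →ₗ[k] (Fin n → k) where
  toFun x := fun j => x j.succ
  map_add' x y := rfl
  map_smul' c y := rfl

theorem tail_cons (x : Fin n → k) : tail0 (cons0 x) = x := rfl

theorem cons_tail (w : Fin (n+1) → k) (h : w 0 = 0) : cons0 (tail0 w) = w := by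
  funext j
  refine Fin.cases ?_ (fun j => ?_) j
  · rw [h]; rfl
  · rfl

/-- the map of cones induced by a rational map in adapted coordinates -/
noncomputable def Phi (T T' : (Fin (n+1) → k) ≃ₗ[k] (Fin (n+1) → k)) (F : RatMap k n n) (j : Fin n) :
    MvPolynomial (Fin n) k :=
  aeval (LF (T.toLinearMap ∘ₗ cons0)) (aeval F.comp (LF (tail0 ∘ₗ T'.symm.toLinearMap) j))

theorem Phi_homog (T T' : (Fin (n+1) → k) ≃ₗ[k] (Fin (n+1) → k)) (F : RatMap k n n) (j : Fin n) :
    (Phi T T' F j).IsHomogeneous (1 * (F.deg * 1)) :=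
  homog_aeval (homog_aeval (LF_homog _ j) F.homog) (LF_homog _)

theorem eval_Phi (T T' : (Fin (n+1) → k) ≃ₗ[k] (Fin (n+1) → k)) (F : RatMap k n n) (x : Fin n → k) :
    (fun j => eval x (Phi T T' F j)) =
      tail0 (T'.symm (fun i => eval (T (cons0 x)) (F.comp i))) := by
  funext j
  rw [Phi, eval_LF_aeval, eval_aeval, eval_LF]
  rfl

/-- adapted coordinates -/
structure Adapt (T : (Fin (n+1) → k) ≃ₗ[k] (Fin (n+1) → k)) (f h : MvPolynomial (Fin (n+1)) k)
    (f0 : MvPolynomial (Fin n) k) : Prop where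
  hf : ∃ d, f.IsHomogeneous d
  hh : ∃ d, h.IsHomogeneous d
  e1 : ∀ x : Fin n → k, eval x f0 = eval (T (cons0 x)) f
  e2 : ∀ x : Fin n → k, eval (T (cons0 x)) h = 0
  e3 : ∀ w, eval w h = 0 → (T.symm w) 0 = 0

variable {T T' : (Fin (n+1) → k) ≃ₗ[k] (Fin (n+1) → k)} {f h f' h' : MvPolynomial (Fin (n+1)) k}
    {f0 f0' : MvPolynomial (Fin n) k}

theorem Adapt.back (A : Adapt T f h f0) {w : Fin (n+1) → k} (hw : eval w h = 0) : 
    T (cons0 (tail0 (T.symm w))) = w := by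
  rw [cons_tail _ (A.e3 w hw), T.apply_symm_apply]

theorem Adapt.half (A : Adapt T f h f0) (A' : Adapt T' f' h' f0') {F G : RatMap k n n}
    {u : MvPolynomial (Fin (n+1)) k} {du : ℕ} (hu : u.IsHomogeneous du)
    (H : ∀ x ∈ (zeros k f ∩ zeros k h) \ zeros k u,
      F.Defined x ∧ F.app x ∈ (zeros k f' ∩ zeros k h') ∧ G.Defined (F.app x) ∧ G.app (F.app x) = x) :
    Half f0 f0' (Phi T T' F) (Phi T' T G) (aeval (LF (T.toLinearMap ∘ₗ cons0)) u) := by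
  intro x hx h1 h2
  obtain ⟨d, hf⟩ := A.hf
  obtain ⟨e, hh⟩ := A.hh
  obtain ⟨d', hf'⟩ := A'.hf
  obtain ⟨e', hh'⟩ := A'.hh
  rw [eval_LF_aeval] at h2
  change eval (T (cons0 x)) u ≠ 0 at h2
  have hw : T (cons0 x) ≠ 0 := by
    intro h0
    rw [LinearEquiv.map_eq_zero_iff] at h0
    apply hx
    rw [← tail_cons x, h0, map_zero]
  obtain ⟨h3, h4, h5, h6⟩ := H (Projectivization.mk k _ hw) ⟨⟨(zeros_mk hf _ _).2 (by rw [← A.e1, h1]),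
    (zeros_mk hh _ _).2 (A.e2 x)⟩, fun h => h2 ((zeros_mk hu _ _).1 h)⟩
  have h3' := (defined_mk _ _ _).1 h3
  rw [app_mk F _ hw h3'] at h4 h5 h6
  have h5' := (defined_mk _ _ _).1 h5
  rw [app_mk G _ h3' h5', Projectivization.mk_eq_mk_iff] at h6
  obtain ⟨c, hc⟩ := h6
  have h41 := (zeros_mk hf' _ _).1 h4.1
  have h42 := (zeros_mk hh' _ _).1 h4.2
  have hb := A'.back h42
  rw [eval_Phi, eval_Phi, A'.e1, hb, ← hc]
  refine ⟨?_, h41, c, c.ne_zero, ?_⟩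
  · intro h0
    rw [h0, map_zero, map_zero] at hb
    exact h3' hb.symm
  · rw [Units.smul_def, map_smul, map_smul, T.symm_apply_apply, tail_cons]

theorem Adapt.point (A : Adapt T f h f0) {u : MvPolynomial (Fin (n+1)) k} {du : ℕ} (hu : u.IsHomogeneous du)
    (H : ¬ zeros k f ∩ zeros k h ⊆ zeros k u) : (∃ i, ¬ f ∣ X i) ∧ (∃ i, ¬ f0 ∣ X i) ∧ 
     ¬ f0 ∣ aeval (LF (T.toLinearMap ∘ₗ cons0)) u := by
  obtain ⟨d, hf⟩ := A.hf
  obtain ⟨e, hh⟩ := A.hh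
  obtain ⟨x, hx, hxu⟩ := Set.not_subset.1 H
  induction x using Projectivization.ind with
  | h w hw =>
    have h1 := (zeros_mk hf _ _).1 hx.1
    have h2 := (zeros_mk hh _ _).1 hx.2
    have h3 : eval w u ≠ 0 := fun h => hxu ((zeros_mk hu _ _).2 h)
    have hb := A.back h2
    have h4 : eval (tail0 (T.symm w)) f0 = 0 := by rw [A.e1, hb, h1]
    refine ⟨exists_ndvd hw h1, exists_ndvd (v := tail0 (T.symm w)) ?_ h4, ?_⟩
    · intro h0
      rw [h0, map_zero, map_zero] at hb
      exact hw hb.symm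
    · rintro ⟨g, hg⟩
      have := congrArg (eval (tail0 (T.symm w))) hg
      rw [map_mul, h4, zero_mul, eval_LF_aeval] at this
      change eval (T (cons0 (tail0 (T.symm w)))) u = 0 at this
      rw [hb] at this
      exact h3 this

end final

end ConeCrem

open ProjSp

/-- Theorem `th:cone` of the paper.
Let `S₁` and `S₂` be two irreducible reduced cones in `ℙⁿ` over an algebraically
closed field of characteristic zero, with vertices `p₁`, `p₂`, and let
`Cᵢ = Sᵢ ∩ Hᵢ` be (general) hyperplane sections, where `Hᵢ` is a hyperplane not
passing through the vertex `pᵢ` (for a cone, all such sections are projectively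
equivalent, so this is the general hyperplane section).  If `C₁` is birational to
`C₂` as abstract varieties, then `S₁` is Cremona equivalent to `S₂`. -/
theorem cones_cremonaEquivalent_of_birational_sections
    (k : Type) [Field k] [IsAlgClosed k] [CharZero k] (n : ℕ)
    (S₁ S₂ : Set (ProjSp k n)) (p₁ p₂ : ProjSp k n) (H₁ H₂ : Set (ProjSp k n))
    (hS₁ : IsIrredDivisor k S₁) (hS₂ : IsIrredDivisor k S₂)
    (hcone₁ : IsConeWithVertex k S₁ p₁) (hcone₂ : IsConeWithVertex k S₂ p₂)
    (hH₁ : IsHyperplane k H₁) (hH₂ : IsHyperplane k H₂)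
    (hp₁ : p₁ ∉ H₁) (hp₂ : p₂ ∉ H₂)
    (hbir : Birational k (S₁ ∩ H₁) (S₂ ∩ H₂)) :
    CremonaEquivalent k S₁ S₂ := by
  obtain ⟨d₁, f₁, hd₁, hf₁, if₁, rfl⟩ := hS₁
  obtain ⟨d₂, f₂, hd₂, hf₂, if₂, rfl⟩ := hS₂
  obtain ⟨h₁, -, hh₁, rfl⟩ := hH₁
  obtain ⟨h₂, -, hh₂, rfl⟩ := hH₂
  obtain ⟨F, G, u, v, du, dv, hu, hv, hA, hB, hF, hG⟩ := hbir
  obtain ⟨T₁, g₁, pg₁, hg₁, bir₁, H₁⟩ := ConeCrem.cone_red hd₁ hf₁ if₁.prime hh₁ hcone₁ hp₁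
  obtain ⟨T₂, g₂, pg₂, hg₂, bir₂, H₂⟩ := ConeCrem.cone_red hd₂ hf₂ if₂.prime hh₂ hcone₂ hp₂
  have A₁ : ConeCrem.Adapt T₁ f₁ h₁ g₁ :=
    ⟨⟨_, hf₁⟩, ⟨_, hh₁⟩, fun x => (H₁ x).1, fun x => (H₁ x).2.1, (H₁ 0).2.2⟩
  have A₂ : ConeCrem.Adapt T₂ f₂ h₂ g₂ :=
    ⟨⟨_, hf₂⟩, ⟨_, hh₂⟩, fun x => (H₂ x).1, fun x => (H₂ x).2.1, (H₂ 0).2.2⟩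
  obtain ⟨⟨i₁, hi₁⟩, ⟨j₁, hj₁⟩, hu'⟩ := A₁.point hu hA
  obtain ⟨⟨i₂, hi₂⟩, ⟨j₂, hj₂⟩, hv'⟩ := A₂.point hv hB
  have key := ConeCrem.sec_bir (A₁.half A₂ hu hF) (A₂.half A₁ hv hG) pg₁ pg₂ hj₁ hj₂ hu' hv' hg₁ hg₂
    (ConeCrem.Phi_homog _ _ _) (ConeCrem.Phi_homog _ _ _)
  have P₁ := ConeCrem.Rn_prime pg₁
  have P₂ := ConeCrem.Rn_prime pg₂
  exact ConeCrem.bridge hf₁ hf₂ if₁.prime if₂.prime hi₁ hi₂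
    ((bir₁.trans if₁.prime P₁ P₂ key).trans if₁.prime P₂ if₂.prime bir₂.symm)
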